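/- arXiv:1903.00229 — 2 statements merged into one kernel-verified Lean document; each statement's English description precedes it below -/
import Mathlib

section
/- Let f ∈ C(𝕋) and r, n ∈ ℕ. Then 2^{-nr}‖(V_{2^n}f)^{(r)}‖_{L_∞(𝕋)} ≤ C·ω_r(f, 2^{-n})_∞ and ω_r(f, 2^{-n})_∞ ≤ C·Σ_{k=n+1}^∞ 2^{-kr}‖(V_{2^k}f)^{(r)}‖_{L_∞(𝕋)}, with C independent of f and n. -/
open scoped ENNReal
open MeasureTheory

/-- Lebesgue measure on the fundamental interval `[0,2π]` of the circle `𝕋`. -/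
noncomputable def circleMeasure : Measure ℝ :=
  volume.restrict (Set.Icc 0 (2 * Real.pi))

/-- `f` is `2π`-periodic. -/
def Periodic2PiOne (f : ℝ → ℂ) : Prop :=
  ∀ x : ℝ, f (x + 2 * Real.pi) = f x

/-- Forward difference `Δ_h f = f(·+h) − f(·)`. -/
def cDiffOne (h : ℝ) (f : ℝ → ℂ) : ℝ → ℂ :=
  fun x => f (x + h) - f x

/-- Modulus of smoothness `ω_r(f,δ)_p = sup_{|h|≤δ} ‖Δ_h^r f‖_{L_p(𝕋)}`. -/
noncomputable def modSmoothOne (r : ℕ) (p : ℝ≥0∞) (f : ℝ → ℂ) (δ : ℝ) : ℝ≥0∞ :=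
  ⨆ h : {h : ℝ // |h| ≤ δ}, eLpNorm ((cDiffOne h.1)^[r] f) p circleMeasure

/-- Trigonometric polynomials of degree at most `n` on `𝕋`. -/
def TrigPolyOne (n : ℝ) : Set (ℝ → ℂ) :=
  {T | ∃ (s : Finset ℤ) (c : ℤ → ℂ), (∀ k ∈ s, |(k : ℝ)| ≤ n) ∧
    ∀ x : ℝ, T x = ∑ k ∈ s, c k * Complex.exp (Complex.I * k * x)}

/-- The de la Vallée Poussin-type kernel
`K_n(t) = 1/2 + ∑_{k=1}^{2n} cos kt + ∑_{k=2n+1}^{4n−1} ((4n−k)/(2n)) cos kt`. -/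
noncomputable def vdpInterpKernel (n : ℕ) (t : ℝ) : ℝ :=
  1 / 2 + ∑ k ∈ Finset.Icc 1 (2 * n), Real.cos (k * t) +
    ∑ k ∈ Finset.Icc (2 * n + 1) (4 * n - 1), (((4 * n : ℝ) - k) / (2 * n)) * Real.cos (k * t)

/-- The interpolation analogue of the de la Vallée Poussin means
`V_n f(t) = (1/(3n)) ∑_{k=0}^{6n−1} f(t_k) K_n(t − t_k)`, `t_k = πk/(3n)`. -/
noncomputable def vdpInterp (n : ℕ) (f : ℝ → ℂ) (t : ℝ) : ℂ :=
  (1 / (3 * n) : ℝ) • ∑ k ∈ Finset.range (6 * n),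
    f (Real.pi * k / (3 * n)) * ((vdpInterpKernel n (t - Real.pi * k / (3 * n)) : ℝ) : ℂ)

/-!
On the nodes `2πk/6n` the kernel `2 K_n` is cardinal, so `V_n f` interpolates `f`; it reproduces
polynomials of degree `2n`, is bounded by `3` because `4n K_n` is a difference of two nonnegative
Fejér sums, and commutes with differences whose step is the node spacing `h = π/3n`.

For polynomials of degree `d` with `hd < 2π` the multiplier `(iu/(e^{iu} - 1))^r` is smooth on the
relevant frequencies, which yields the Nikolskii–Stechkin inequality `h^r ‖T^{(r)}‖ ≲ ‖Δ_h^r T‖`.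
Since `V_n f` has degree `4n` and `4n h = 4π/3`, applying it to `T = V_n f` and using
`Δ_h^r V_n f = V_n Δ_h^r f` gives the first estimate.

Conversely the multiplier `(1 - χ(u))/(iu)^r` yields the Jackson inequality for polynomials.
Because the nodes of `V_n` are among those of `V_{2n}`, `V_n f = V_n V_{2n} f`, so Jackson bounds
`‖V_{2n} f - V_n f‖` by `(2n)^{-r} ‖(V_{2n} f)^{(r)}‖`. Telescoping along the powers of two bounds
`‖f - V_{2^{n+1}} f‖`, and comparing `f` with the smooth function `V_{2^{n+1}} f` gives the second
estimate.
-/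

section UniformNorm

variable {α E : Type*} [SeminormedAddCommGroup E]

/-- The uniform norm of a function, with values in `[0, ∞]` so that unbounded functions need no
special treatment. -/
noncomputable def supENorm (g : α → E) : ℝ≥0∞ := ⨆ x, ‖g x‖ₑ

lemma enorm_le_supENorm (g : α → E) (x : α) : ‖g x‖ₑ ≤ supENorm g :=
  le_iSup (fun x => ‖g x‖ₑ) x

lemma supENorm_le {g : α → E} {A : ℝ≥0∞} (h : ∀ x, ‖g x‖ₑ ≤ A) : supENorm g ≤ A :=
  iSup_le h

lemma supENorm_le_ofReal_iff {g : α → E} {ε : ℝ} (hε : 0 ≤ ε) :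
    supENorm g ≤ ENNReal.ofReal ε ↔ ∀ x, ‖g x‖ ≤ ε := by
  simp only [supENorm, iSup_le_iff, ← ofReal_norm, ENNReal.ofReal_le_ofReal_iff hε]

lemma supENorm_add_le (f g : α → E) : supENorm (f + g) ≤ supENorm f + supENorm g :=
  supENorm_le fun x => (ENNReal.coe_le_coe.2 (nnnorm_add_le (f x) (g x))).trans
    ((ENNReal.coe_add _ _).trans_le
      (add_le_add (enorm_le_supENorm f x) (enorm_le_supENorm g x)))

lemma supENorm_sub_le (f g : α → E) : supENorm (f - g) ≤ supENorm f + supENorm g :=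
  supENorm_le fun x => enorm_sub_le.trans
    (add_le_add (enorm_le_supENorm f x) (enorm_le_supENorm g x))

lemma supENorm_comp_le {β : Type*} (g : α → E) (e : β → α) : supENorm (g ∘ e) ≤ supENorm g :=
  iSup_comp_le (fun x => ‖g x‖ₑ) e

lemma supENorm_const_smul {𝕜 : Type*} [NormedField 𝕜] [NormedSpace 𝕜 E] (b : 𝕜) (g : α → E) :
    supENorm (b • g) = ‖b‖ₑ * supENorm g := by
  simp only [supENorm, Pi.smul_apply, enorm_smul, ENNReal.mul_iSup]

lemma supENorm_sub_le_tsum {f : α → E} {g : ℕ → α → E}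
    (hg : ∀ x, Filter.Tendsto (fun m => g m x) Filter.atTop (nhds (f x))) :
    supENorm (f - g 0) ≤ ∑' m, supENorm (g (m + 1) - g m) := by
  refine supENorm_le fun x => ?_
  rw [Pi.sub_apply, ← edist_eq_enorm_sub, edist_comm]
  refine edist_le_tsum_of_edist_le_of_tendsto₀ (fun m => supENorm (g (m + 1) - g m))
    (fun m => ?_) (hg x)
  rw [edist_comm, edist_eq_enorm_sub]
  exact enorm_le_supENorm (g (m + 1) - g m) x

lemma eLpNorm_top_le_supENorm [MeasurableSpace α] (g : α → E) (μ : Measure α) :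
    eLpNorm g ∞ μ ≤ supENorm g := by
  rw [eLpNorm_exponent_top]
  exact eLpNormEssSup_le_of_ae_enorm_bound (.of_forall (enorm_le_supENorm g))

lemma eLpNorm_top_restrict_Icc_eq_supENorm {g : ℝ → E} (hc : Continuous g) {T : ℝ} (hT : 0 < T)
    (hp : Function.Periodic g T) (a : ℝ) :
    eLpNorm g ∞ (volume.restrict (Set.Icc a (a + T))) = supENorm g := by
  refine (eLpNorm_top_le_supENorm g _).antisymm (supENorm_le fun x => ?_)
  rw [eLpNorm_exponent_top]
  set A := eLpNormEssSup g (volume.restrict (Set.Icc a (a + T)))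
  have hae : (fun y => min ‖g y‖ₑ A) =ᵐ[volume.restrict (Set.Icc a (a + T))] fun y => ‖g y‖ₑ := by
    filter_upwards [ae_le_eLpNormEssSup (f := g)] with y hy using min_eq_left hy
  have heq : Set.EqOn (fun y => min ‖g y‖ₑ A) (fun y => ‖g y‖ₑ) (Set.Icc a (a + T)) :=
    Measure.eqOn_Icc_of_ae_eq volume (by linarith) hae
      (hc.enorm.min continuous_const).continuousOn hc.enorm.continuousOn
  obtain ⟨y, hy, hxy⟩ := hp.exists_mem_Ico hT x a
  rw [hxy]
  exact min_eq_left_iff.1 (heq (Set.Ico_subset_Icc_self hy))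

lemma eLpNorm_top_circleMeasure {g : ℝ → E} (hc : Continuous g)
    (hp : Function.Periodic g (2 * Real.pi)) : eLpNorm g ∞ circleMeasure = supENorm g := by
  simpa [circleMeasure] using
    eLpNorm_top_restrict_Icc_eq_supENorm hc Real.two_pi_pos hp 0

end UniformNorm

section ForwardDifferences

section AddCommMonoid

variable {M E : Type*} [AddCommMonoid M]

lemma periodic_fwdDiff_iter [AddCommGroup E] {f : M → E} {c : M} (hf : Function.Periodic f c)
    (h : M) (r : ℕ) : Function.Periodic ((fwdDiff h)^[r] f) c := by
  intro x
  rw [← fwdDiff_iter_comp_add, hf.funext]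

lemma continuous_fwdDiff_iter [TopologicalSpace M] [ContinuousAdd M] [AddCommGroup E]
    [TopologicalSpace E] [IsTopologicalAddGroup E] {f : M → E} (hf : Continuous f) (h : M)
    (r : ℕ) : Continuous ((fwdDiff h)^[r] f) := by
  rw [funext (fwdDiff_iter_eq_sum_shift h f r)]
  fun_prop

variable [SeminormedAddCommGroup E]

lemma supENorm_fwdDiff_iter_le (h : M) (r : ℕ) (f : M → E) :
    supENorm ((fwdDiff h)^[r] f) ≤ 2 ^ r * supENorm f := by
  induction r generalizing f with
  | zero => simp
  | succ r ih =>
    have hstep : supENorm (fwdDiff h f) ≤ 2 * supENorm f := by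
      rw [two_mul]
      exact (supENorm_sub_le (f ∘ (· + h)) f).trans (by gcongr; exact supENorm_comp_le f _)
    rw [Function.iterate_succ_apply, pow_succ, mul_assoc]
    exact (ih _).trans (by gcongr)

lemma fwdDiff_add_self (h : M) (f : M → E) :
    fwdDiff (h + h) f = fwdDiff h ((fun x => f (x + h)) + f) := by
  funext x
  simp only [fwdDiff, Pi.add_apply, add_assoc]
  abel

lemma supENorm_fwdDiff_iter_add_self_le (h : M) (r : ℕ) (f : M → E) :
    supENorm ((fwdDiff (h + h))^[r] f) ≤ 2 ^ r * supENorm ((fwdDiff h)^[r] f) := by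
  induction r generalizing f with
  | zero => simp
  | succ r ih =>
    have hstep : supENorm ((fwdDiff h)^[r] (fwdDiff (h + h) f)) ≤
        2 * supENorm ((fwdDiff h)^[r + 1] f) := by
      rw [fwdDiff_add_self, ← Function.iterate_succ_apply, fwdDiff_iter_add, two_mul,
        funext (fwdDiff_iter_comp_add h f h (r + 1))]
      exact (supENorm_add_le _ _).trans
        (by gcongr; exact supENorm_comp_le ((fwdDiff h)^[r + 1] f) (· + h))
    rw [Function.iterate_succ_apply, pow_succ, mul_assoc]
    exact (ih _).trans (by gcongr)

end AddCommMonoid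

variable {𝕜 E : Type*} [RCLike 𝕜] [NormedAddCommGroup E] [NormedSpace 𝕜 E]

lemma supENorm_fwdDiff_le_enorm_mul {f : 𝕜 → E} (hf : Differentiable 𝕜 f) (h : 𝕜) :
    supENorm (fwdDiff h f) ≤ ‖h‖ₑ * supENorm (deriv f) := by
  refine supENorm_le fun x => ?_
  rcases eq_or_ne h 0 with rfl | hh
  · simp [fwdDiff]
  by_cases htop : supENorm (deriv f) = ∞
  · simp [htop, ENNReal.mul_top, hh]
  have hlip : LipschitzWith (supENorm (deriv f)).toNNReal f :=
    lipschitzWith_of_nnnorm_deriv_le hf fun y => by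
      rw [← ENNReal.coe_le_coe, ENNReal.coe_toNNReal htop]
      exact enorm_le_supENorm (deriv f) y
  simpa [fwdDiff, edist_eq_enorm_sub, ENNReal.coe_toNNReal htop, mul_comm] using hlip (x + h) x

lemma iterate_deriv_fwdDiff {r : ℕ} {f : 𝕜 → E} (hf : ContDiff 𝕜 r f) (h : 𝕜) :
    deriv^[r] (fwdDiff h f) = fwdDiff h (deriv^[r] f) := by
  have hshift : ContDiff 𝕜 r fun x => f (x + h) := hf.comp (contDiff_id.add contDiff_const)
  simp only [← iteratedDeriv_eq_iterate]
  funext x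
  rw [fwdDiff, ← congrFun (iteratedDeriv_comp_add_const r f h) x]
  exact iteratedDeriv_fun_sub hshift.contDiffAt hf.contDiffAt

lemma supENorm_fwdDiff_iter_le_enorm_pow_mul {r : ℕ} {f : 𝕜 → E} (hf : ContDiff 𝕜 r f) (h : 𝕜) :
    supENorm ((fwdDiff h)^[r] f) ≤ ‖h‖ₑ ^ r * supENorm (deriv^[r] f) := by
  induction r generalizing f with
  | zero => simp
  | succ r ih =>
    have hr : ContDiff 𝕜 r f := hf.of_le (by norm_cast; omega)
    have hdiff : Differentiable 𝕜 (deriv^[r] f) := by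
      rw [← iteratedDeriv_eq_iterate]
      exact hf.differentiable_iteratedDeriv r (by norm_cast; omega)
    calc supENorm ((fwdDiff h)^[r + 1] f)
        ≤ ‖h‖ₑ ^ r * supENorm (fwdDiff h (deriv^[r] f)) := by
          rw [Function.iterate_succ_apply, ← iterate_deriv_fwdDiff hr]
          exact ih ((hr.comp (contDiff_id.add contDiff_const)).sub hr)
      _ ≤ ‖h‖ₑ ^ r * (‖h‖ₑ * supENorm (deriv (deriv^[r] f))) := by
          gcongr
          exact supENorm_fwdDiff_le_enorm_mul hdiff h
      _ = ‖h‖ₑ ^ (r + 1) * supENorm (deriv^[r + 1] f) := by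
          rw [Function.iterate_succ_apply', pow_succ, mul_assoc]

end ForwardDifferences

section ModulusOfSmoothness

lemma cDiffOne_eq_fwdDiff (h : ℝ) : cDiffOne h = fwdDiff h := rfl

lemma modSmoothOne_top_le {r : ℕ} (f : ℝ → ℂ) {g : ℝ → ℂ} (hg : ContDiff ℝ r g) (δ : ℝ) :
    modSmoothOne r ∞ f δ ≤ 2 ^ r * supENorm (f - g) + ‖δ‖ₑ ^ r * supENorm (deriv^[r] g) := by
  refine iSup_le fun ⟨h, hh⟩ => (eLpNorm_top_le_supENorm _ _).trans ?_
  have hδ : ‖h‖ₑ ≤ ‖δ‖ₑ := enorm_le_iff_norm_le.2 (hh.trans (le_abs_self δ))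
  calc supENorm ((cDiffOne h)^[r] f)
      = supENorm ((fwdDiff h)^[r] (f - g) + (fwdDiff h)^[r] g) := by
        rw [← fwdDiff_iter_add, sub_add_cancel, cDiffOne_eq_fwdDiff]
    _ ≤ supENorm ((fwdDiff h)^[r] (f - g)) + supENorm ((fwdDiff h)^[r] g) := supENorm_add_le _ _
    _ ≤ 2 ^ r * supENorm (f - g) + ‖h‖ₑ ^ r * supENorm (deriv^[r] g) :=
        add_le_add (supENorm_fwdDiff_iter_le h r _) (supENorm_fwdDiff_iter_le_enorm_pow_mul hg h)
    _ ≤ 2 ^ r * supENorm (f - g) + ‖δ‖ₑ ^ r * supENorm (deriv^[r] g) := by gcongr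

lemma supENorm_fwdDiff_iter_le_modSmoothOne_top {f : ℝ → ℂ} (hf : Continuous f)
    (hp : Function.Periodic f (2 * Real.pi)) (r : ℕ) {h δ : ℝ} (hh : |h| ≤ 2 * δ) :
    supENorm ((fwdDiff h)^[r] f) ≤ 2 ^ r * modSmoothOne r ∞ f δ := by
  have hhalf : |h / 2| ≤ δ := by
    rw [abs_div, abs_two]
    linarith
  calc supENorm ((fwdDiff h)^[r] f)
      = supENorm ((fwdDiff (h / 2 + h / 2))^[r] f) := by rw [add_halves]
    _ ≤ 2 ^ r * supENorm ((fwdDiff (h / 2))^[r] f) := supENorm_fwdDiff_iter_add_self_le _ r f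
    _ = 2 ^ r * eLpNorm ((cDiffOne (h / 2))^[r] f) ∞ circleMeasure := by
        rw [cDiffOne_eq_fwdDiff, eLpNorm_top_circleMeasure (continuous_fwdDiff_iter hf _ r)
          (periodic_fwdDiff_iter hp _ r)]
    _ ≤ 2 ^ r * modSmoothOne r ∞ f δ := by
        gcongr
        exact le_iSup (fun h : {h : ℝ // |h| ≤ δ} =>
          eLpNorm ((cDiffOne h.1)^[r] f) ∞ circleMeasure) ⟨h / 2, hhalf⟩

end ModulusOfSmoothness

section TrigonometricPolynomials

/-- The trigonometric sum with frequencies in `s` and coefficients `c`. -/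
noncomputable def trigSum (s : Finset ℤ) (c : ℤ → ℂ) (x : ℝ) : ℂ :=
  ∑ j ∈ s, c j * Complex.exp (Complex.I * j * x)

lemma mem_trigPolyOne_iff {d : ℝ} {T : ℝ → ℂ} :
    T ∈ TrigPolyOne d ↔
      ∃ (s : Finset ℤ) (c : ℤ → ℂ), (∀ k ∈ s, |(k : ℝ)| ≤ d) ∧ T = trigSum s c := by
  simp only [TrigPolyOne, Set.mem_ofPred_eq, funext_iff, trigSum]

lemma trigSum_mem_trigPolyOne {d : ℝ} {s : Finset ℤ} (hs : ∀ k ∈ s, |(k : ℝ)| ≤ d) (c : ℤ → ℂ) :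
    trigSum s c ∈ TrigPolyOne d :=
  mem_trigPolyOne_iff.2 ⟨s, c, hs, rfl⟩

lemma trigSum_congr {s : Finset ℤ} {c c' : ℤ → ℂ} (h : ∀ j ∈ s, c j = c' j) :
    trigSum s c = trigSum s c' :=
  funext fun _ => Finset.sum_congr rfl fun j hj => by rw [h j hj]

lemma trigSum_sub (s : Finset ℤ) (c c' : ℤ → ℂ) :
    trigSum s (c - c') = trigSum s c - trigSum s c' := by
  funext x
  simp only [trigSum, Pi.sub_apply, sub_mul, Finset.sum_sub_distrib]

lemma contDiff_trigSum (s : Finset ℤ) (c : ℤ → ℂ) {n : WithTop ℕ∞} :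
    ContDiff ℝ n (trigSum s c) := by
  have hcoe : ContDiff ℝ n ((↑) : ℝ → ℂ) := Complex.ofRealCLM.contDiff
  exact ContDiff.sum fun j _ => contDiff_const.mul (contDiff_const.mul hcoe).cexp

lemma periodic_trigSum (s : Finset ℤ) (c : ℤ → ℂ) :
    Function.Periodic (trigSum s c) (2 * Real.pi) := by
  refine fun x => Finset.sum_congr rfl fun j _ => ?_
  rw [show Complex.I * j * ((x + 2 * Real.pi : ℝ) : ℂ) =
    Complex.I * j * x + j * (2 * Real.pi * Complex.I) by push_cast; ring,
    Complex.exp_add, Complex.exp_int_mul_two_pi_mul_I, mul_one]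

lemma trigSum_const_mul (s : Finset ℤ) (b : ℂ) (c : ℤ → ℂ) :
    (trigSum s fun j => b * c j) = b • trigSum s c := by
  funext x
  simp only [trigSum, Pi.smul_apply, smul_eq_mul, Finset.mul_sum, mul_assoc]

lemma deriv_trigSum (s : Finset ℤ) (c : ℤ → ℂ) :
    deriv (trigSum s c) = trigSum s fun j => (Complex.I * j) * c j := by
  funext x
  refine HasDerivAt.deriv (HasDerivAt.fun_sum fun j _ => ?_)
  have hlin : HasDerivAt (fun x : ℝ => Complex.I * j * (x : ℂ)) (Complex.I * j * 1) x :=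
    Complex.ofRealCLM.hasDerivAt.const_mul _
  exact (hlin.cexp.const_mul (c j)).congr_deriv (by ring)

lemma iterate_deriv_trigSum (s : Finset ℤ) (c : ℤ → ℂ) (r : ℕ) :
    deriv^[r] (trigSum s c) = trigSum s fun j => (Complex.I * j) ^ r * c j := by
  induction r with
  | zero => simp
  | succ r ih => simp only [Function.iterate_succ_apply', ih, deriv_trigSum, pow_succ', mul_assoc]

lemma fwdDiff_trigSum (s : Finset ℤ) (c : ℤ → ℂ) (h : ℝ) :
    fwdDiff h (trigSum s c) =
      trigSum s fun j => (Complex.exp (Complex.I * j * h) - 1) * c j := by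
  funext x
  simp only [fwdDiff, trigSum, ← Finset.sum_sub_distrib]
  refine Finset.sum_congr rfl fun j _ => ?_
  rw [Complex.ofReal_add, mul_add, Complex.exp_add]
  ring

lemma fwdDiff_iter_trigSum (s : Finset ℤ) (c : ℤ → ℂ) (h : ℝ) (r : ℕ) :
    (fwdDiff h)^[r] (trigSum s c) =
      trigSum s fun j => (Complex.exp (Complex.I * j * h) - 1) ^ r * c j := by
  induction r with
  | zero => simp
  | succ r ih => simp only [Function.iterate_succ_apply', ih, fwdDiff_trigSum, pow_succ', mul_assoc]

lemma exists_trigPolyOne_supENorm_sub_le {f : ℝ → ℂ} (hf : Continuous f)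
    (hp : Function.Periodic f (2 * Real.pi)) {ε : ℝ} (hε : 0 < ε) :
    ∃ d, ∃ T ∈ TrigPolyOne d, supENorm (f - T) ≤ ENNReal.ofReal ε := by
  have : Fact (0 < 2 * Real.pi) := ⟨Real.two_pi_pos⟩
  let F : C(AddCircle (2 * Real.pi), ℂ) := ⟨hp.lift, continuous_coinduced_dom.2 hf⟩
  have hF : F ∈ (Submodule.span ℂ (Set.range (@fourier (2 * Real.pi)))).topologicalClosure :=
    (span_fourier_closure_eq_top (T := 2 * Real.pi)) ▸ Submodule.mem_top
  obtain ⟨G, hG, hdist⟩ := Metric.mem_closure_iff.1 hF ε hε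
  obtain ⟨c, rfl⟩ := Finsupp.mem_span_range_iff_exists_finsupp.1 hG
  have hdeg : ∀ k ∈ c.support, |(k : ℝ)| ≤ ∑ j ∈ c.support, |(j : ℝ)| := fun k hk =>
    Finset.single_le_sum (f := fun j : ℤ => |(j : ℝ)|) (fun j _ => abs_nonneg (j : ℝ)) hk
  refine ⟨_, trigSum c.support c, trigSum_mem_trigPolyOne hdeg c,
    (supENorm_le_ofReal_iff hε.le).2 fun x => ?_⟩
  have hG : (c.sum fun j a => a • fourier j) (x : AddCircle (2 * Real.pi)) =
      trigSum c.support c x := by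
    have hpi : (Real.pi : ℂ) ≠ 0 := Complex.ofReal_ne_zero.2 Real.pi_ne_zero
    simp only [Finsupp.sum, ContinuousMap.sum_apply, ContinuousMap.smul_apply, trigSum,
      fourier_coe_apply, smul_eq_mul]
    refine Finset.sum_congr rfl fun j _ => ?_
    congr 2
    push_cast
    field_simp
  rw [Pi.sub_apply, ← hG, ← dist_eq_norm]
  exact (ContinuousMap.dist_apply_le_dist (f := F) (x : AddCircle (2 * Real.pi))).trans hdist.le

end TrigonometricPolynomials

section FourierMultipliers

open scoped FourierTransform SchwartzMap ContDiff

lemma trigSum_fourierInv_mul {ψ : ℝ → ℂ} (hψ : Integrable ψ) (a : ℝ) (s : Finset ℤ)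
    (c : ℤ → ℂ) (x : ℝ) :
    trigSum s (fun j => 𝓕⁻ ψ (a * j) * c j) x =
      ∫ ξ, ψ ξ * trigSum s c (x + 2 * Real.pi * a * ξ) := by
  have hexp : ∀ (j : ℤ) (ξ : ℝ), ψ ξ * (c j * Complex.exp
      (Complex.I * j * ((x + 2 * Real.pi * a * ξ : ℝ) : ℂ))) =
        (c j * Complex.exp (Complex.I * j * x)) *
          (Complex.exp (((2 * Real.pi * (ξ * (a * j)) : ℝ) : ℂ) * Complex.I) * ψ ξ) := by
    intro j ξ
    rw [show Complex.I * j * ((x + 2 * Real.pi * a * ξ : ℝ) : ℂ) = Complex.I * j * x +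
      ((2 * Real.pi * (ξ * (a * j)) : ℝ) : ℂ) * Complex.I by push_cast; ring, Complex.exp_add]
    ring
  have hint : ∀ u : ℝ, Integrable fun ξ : ℝ =>
      Complex.exp (((2 * Real.pi * (ξ * u) : ℝ) : ℂ) * Complex.I) * ψ ξ := fun u =>
    hψ.bdd_mul (c := 1) (by fun_prop)
      (.of_forall fun ξ => (Complex.norm_exp_ofReal_mul_I _).le)
  simp only [trigSum, Finset.mul_sum, hexp]
  rw [integral_finsetSum _ fun j _ => (hint _).const_mul _]
  refine Finset.sum_congr rfl fun j _ => ?_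
  rw [integral_const_mul, Real.fourierInv_eq']
  simp only [smul_eq_mul, RCLike.inner_apply, conj_trivial, mul_comm (a * j : ℝ)]
  ring

lemma supENorm_trigSum_fourierInv_mul_le {ψ : ℝ → ℂ} (hψ : Integrable ψ) (a : ℝ) (s : Finset ℤ)
    (c : ℤ → ℂ) :
    supENorm (trigSum s fun j => 𝓕⁻ ψ (a * j) * c j) ≤
      (∫⁻ ξ, ‖ψ ξ‖ₑ) * supENorm (trigSum s c) := by
  refine supENorm_le fun x => ?_
  rw [trigSum_fourierInv_mul hψ]
  calc ‖∫ ξ, ψ ξ * trigSum s c (x + 2 * Real.pi * a * ξ)‖ₑ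
      ≤ ∫⁻ ξ, ‖ψ ξ * trigSum s c (x + 2 * Real.pi * a * ξ)‖ₑ :=
        enorm_integral_le_lintegral_enorm _
    _ ≤ ∫⁻ ξ, ‖ψ ξ‖ₑ * supENorm (trigSum s c) := by
        refine lintegral_mono fun ξ => ?_
        rw [enorm_mul]
        gcongr
        exact enorm_le_supENorm _ _
    _ = (∫⁻ ξ, ‖ψ ξ‖ₑ) * supENorm (trigSum s c) :=
        lintegral_mul_const'' _ hψ.aestronglyMeasurable.enorm

lemma exists_supENorm_trigSum_schwartzMap_mul_le (φ : 𝓢(ℝ, ℂ)) :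
    ∃ C : NNReal, ∀ (a : ℝ) (s : Finset ℤ) (c : ℤ → ℂ),
      supENorm (trigSum s fun j => φ (a * j) * c j) ≤ C * supENorm (trigSum s c) := by
  have hint : Integrable fun ξ => (𝓕 φ) ξ := (𝓕 φ).integrable
  have hinv : ⇑φ = 𝓕⁻ (fun ξ => (𝓕 φ) ξ : ℝ → ℂ) := by
    rw [← SchwartzMap.fourierInv_coe, FourierTransform.fourierInv_fourier_eq]
  refine ⟨(∫⁻ ξ, ‖(𝓕 φ) ξ‖ₑ).toNNReal, fun a s c => ?_⟩
  rw [ENNReal.coe_toNNReal hint.hasFiniteIntegral.ne, hinv]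
  exact supENorm_trigSum_fourierInv_mul_le hint a s c

lemma exists_schwartzMap_eqOn_closedBall {E F : Type*} [NormedAddCommGroup E]
    [InnerProductSpace ℝ E] [FiniteDimensional ℝ E] [NormedAddCommGroup F] [NormedSpace ℝ F]
    {g : E → F} {x : E} {R R' : ℝ} (hR : 0 < R) (hRR' : R < R')
    (hg : ContDiffOn ℝ ∞ g (Metric.ball x R')) :
    ∃ φ : 𝓢(E, F), Set.EqOn φ g (Metric.closedBall x R) := by
  let b : ContDiffBump x := ⟨R, (R + R') / 2, hR, by linarith⟩
  have hsupp : tsupport b ⊆ Metric.ball x R' := by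
    rw [b.tsupport_eq]
    exact Metric.closedBall_subset_ball (by change (R + R') / 2 < R'; linarith)
  have hsmooth : ContDiff ℝ ∞ fun y => b y • g y := by
    refine contDiff_iff_contDiffAt.2 fun y => ?_
    by_cases hy : y ∈ tsupport b
    · exact b.contDiffAt.smul
        ((hg y (hsupp hy)).contDiffAt (Metric.isOpen_ball.mem_nhds (hsupp hy)))
    · refine (contDiffAt_const (c := (0 : F))).congr_of_eventuallyEq ?_
      filter_upwards [notMem_tsupport_iff_eventuallyEq.1 hy] with z hz
      simp [hz]
  refine ⟨(b.hasCompactSupport.smul_right (f' := g)).toSchwartzMap hsmooth, fun y hy => ?_⟩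
  change b y • g y = g y
  rw [b.one_of_mem_closedBall hy, one_smul]

lemma dslope_exp_zero_ne_zero {w : ℂ} (hw : ‖w‖ < 2 * Real.pi) :
    dslope Complex.exp 0 w ≠ 0 := by
  rcases eq_or_ne w 0 with rfl | hw0
  · simp
  intro hzero
  have hexp : Complex.exp w = 1 := by
    have hslope := sub_smul_dslope Complex.exp 0 w
    rwa [hzero, smul_zero, Complex.exp_zero, eq_comm, sub_eq_zero] at hslope
  obtain ⟨m, rfl⟩ := Complex.exp_eq_one_iff.1 hexp
  have hm : m ≠ 0 := by
    rintro rfl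
    simp at hw0
  have hm1 : (1 : ℝ) ≤ |(m : ℝ)| := by exact_mod_cast Int.one_le_abs hm
  rw [norm_mul, Complex.norm_intCast, Complex.norm_mul, Complex.norm_I, mul_one,
    ← Complex.ofReal_ofNat, ← Complex.ofReal_mul, Complex.norm_of_nonneg Real.two_pi_pos.le] at hw
  nlinarith [Real.pi_pos]

lemma exists_schwartzMap_mul_exp_sub_one_pow (r : ℕ) {ρ : ℝ} (hρ₀ : 0 < ρ)
    (hρ : ρ < 2 * Real.pi) :
    ∃ φ : 𝓢(ℝ, ℂ), ∀ u : ℝ, |u| ≤ ρ →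
      φ u * (Complex.exp (Complex.I * u) - 1) ^ r = (Complex.I * u) ^ r := by
  have hne : ∀ u : ℝ, |u| < 2 * Real.pi → dslope Complex.exp 0 (Complex.I * u) ≠ 0 := fun u hu =>
    dslope_exp_zero_ne_zero (by simpa using hu)
  have hD : ContDiff ℂ ∞ (dslope Complex.exp 0) := by
    refine Differentiable.contDiff (differentiableOn_univ.1 ?_)
    exact (Complex.differentiableOn_dslope Filter.univ_mem).2
      Complex.differentiable_exp.differentiableOn
  have hsmooth : ContDiff ℝ ∞ fun u : ℝ => dslope Complex.exp 0 (Complex.I * u) :=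
    (hD.restrict_scalars ℝ).comp (contDiff_const.mul Complex.ofRealCLM.contDiff)
  have hinv : ContDiffOn ℝ ∞ (fun u : ℝ => (dslope Complex.exp 0 (Complex.I * u))⁻¹ ^ r)
      (Metric.ball 0 (2 * Real.pi)) := fun u hu =>
    ((hsmooth.contDiffAt.inv (hne u (by simpa using hu))).pow r).contDiffWithinAt
  obtain ⟨φ, hφ⟩ := exists_schwartzMap_eqOn_closedBall hρ₀ hρ hinv
  refine ⟨φ, fun u hu => ?_⟩
  have hslope : Complex.exp (Complex.I * u) - 1 =
      Complex.I * u * dslope Complex.exp 0 (Complex.I * u) := by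
    simpa using (sub_smul_dslope Complex.exp 0 (Complex.I * u)).symm
  rw [hφ (by simpa using hu), hslope, ← mul_pow, mul_comm (Complex.I * u),
    inv_mul_cancel_left₀ (hne u (hu.trans_lt hρ))]

lemma exists_schwartzMap_mul_pow_eq_one_sub (r : ℕ) {K : ℝ} (hK : 0 < K) :
    ∃ (φ : 𝓢(ℝ, ℂ)) (χ : ℝ → ℂ), (∀ u, 1 < |u| → χ u = 0) ∧
      ∀ u : ℝ, |u| ≤ K → φ u * (Complex.I * u) ^ r = 1 - χ u := by
  let χ : ContDiffBump (0 : ℝ) := ⟨1 / 2, 1, by norm_num, by norm_num⟩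
  have hcoe : ContDiff ℝ ∞ ((↑) : ℝ → ℂ) := Complex.ofRealCLM.contDiff
  have hg : ContDiff ℝ ∞ fun u : ℝ => (1 - (χ u : ℂ)) * ((Complex.I * u) ^ r)⁻¹ := by
    refine contDiff_iff_contDiffAt.2 fun u => ?_
    rcases eq_or_ne u 0 with rfl | hu
    · refine (contDiffAt_const (c := (0 : ℂ))).congr_of_eventuallyEq ?_
      filter_upwards [χ.eventuallyEq_one] with v hv
      simp [hv]
    · have hpow : ContDiff ℝ ∞ fun u : ℝ => (Complex.I * (u : ℂ)) ^ r :=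
        (contDiff_const.mul hcoe).pow r
      exact (contDiff_const.sub (hcoe.comp χ.contDiff)).contDiffAt.mul
        (hpow.contDiffAt.inv (by simp [hu]))
  obtain ⟨φ, hφ⟩ := exists_schwartzMap_eqOn_closedBall hK (lt_add_one K)
    (hg.contDiffOn (s := Metric.ball 0 (K + 1)))
  refine ⟨φ, fun u => χ u, fun u hu => ?_, fun u hu => ?_⟩
  · have hχ : χ u = 0 := χ.zero_of_le_dist (by simpa using hu.le)
    simp only [hχ, Complex.ofReal_zero]
  · rw [hφ (by simpa using hu)]
    rcases eq_or_ne u 0 with rfl | hu0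
    · simp [show χ 0 = 1 from χ.eventuallyEq_one.eq_of_nhds]
    · exact inv_mul_cancel_right₀ (by simp [hu0]) _

lemma exists_enorm_pow_mul_supENorm_iterate_deriv_le (r : ℕ) {ρ : ℝ} (hρ₀ : 0 < ρ)
    (hρ : ρ < 2 * Real.pi) :
    ∃ C : NNReal, ∀ h d : ℝ, |h| * d ≤ ρ → ∀ T ∈ TrigPolyOne d,
      ‖h‖ₑ ^ r * supENorm (deriv^[r] T) ≤ C * supENorm ((fwdDiff h)^[r] T) := by
  obtain ⟨φ, hφ⟩ := exists_schwartzMap_mul_exp_sub_one_pow r hρ₀ hρ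
  obtain ⟨C, hC⟩ := exists_supENorm_trigSum_schwartzMap_mul_le φ
  refine ⟨C, fun h d hd T hT => ?_⟩
  obtain ⟨s, c, hs, rfl⟩ := mem_trigPolyOne_iff.1 hT
  have hmult : (h : ℂ) ^ r • deriv^[r] (trigSum s c) =
      trigSum s fun j => φ (h * j) * ((Complex.exp (Complex.I * j * h) - 1) ^ r * c j) := by
    rw [iterate_deriv_trigSum, ← trigSum_const_mul]
    refine trigSum_congr fun j hj => ?_
    have hhj : |h * j| ≤ ρ := by
      rw [abs_mul]
      exact (mul_le_mul_of_nonneg_left (hs j hj) (abs_nonneg h)).trans hd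
    have hφj := hφ (h * j) hhj
    rw [Complex.ofReal_mul, Complex.ofReal_intCast,
      show Complex.I * (h * j) = Complex.I * j * h by ring] at hφj
    rw [← mul_assoc (φ _), hφj]
    ring
  calc ‖h‖ₑ ^ r * supENorm (deriv^[r] (trigSum s c))
      = supENorm ((h : ℂ) ^ r • deriv^[r] (trigSum s c)) := by
        rw [supENorm_const_smul, enorm_pow, ← ofReal_norm (h : ℂ), Complex.norm_real, ofReal_norm]
    _ ≤ C * supENorm ((fwdDiff h)^[r] (trigSum s c)) := by
        rw [hmult, fwdDiff_iter_trigSum]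
        exact hC h s _

lemma exists_supENorm_sub_trigPolyOne_inv_le (r : ℕ) {K : ℝ} (hK : 0 < K) :
    ∃ C : NNReal, ∀ a d : ℝ, 0 < a → a * d ≤ K → ∀ T ∈ TrigPolyOne d,
      ∃ Q ∈ TrigPolyOne a⁻¹, supENorm (T - Q) ≤ C * (‖a‖ₑ ^ r * supENorm (deriv^[r] T)) := by
  obtain ⟨φ, χ, hχ, hφ⟩ := exists_schwartzMap_mul_pow_eq_one_sub r hK
  obtain ⟨C, hC⟩ := exists_supENorm_trigSum_schwartzMap_mul_le φ
  refine ⟨C, fun a d ha had T hT => ?_⟩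
  obtain ⟨s, c, hs, rfl⟩ := mem_trigPolyOne_iff.1 hT
  set s' := s.filter fun j : ℤ => |(j : ℝ)| ≤ a⁻¹
  have hQ : trigSum s' (fun j => χ (a * j) * c j) = trigSum s fun j => χ (a * j) * c j := by
    refine funext fun x => Finset.sum_subset (Finset.filter_subset _ _) fun j hj hj' => ?_
    have hlt : a⁻¹ < |(j : ℝ)| := by simpa [s', hj] using hj'
    have hχj : χ (a * j) = 0 := hχ _ <| by
      rwa [abs_mul, abs_of_pos ha, ← inv_lt_iff_one_lt_mul₀' ha]
    simp only [hχj, zero_mul]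
  have hdiff : trigSum s c - trigSum s' (fun j => χ (a * j) * c j) =
      trigSum s fun j => φ (a * j) * ((a : ℂ) ^ r * ((Complex.I * j) ^ r * c j)) := by
    rw [hQ, ← trigSum_sub]
    refine trigSum_congr fun j hj => ?_
    have haj : |a * j| ≤ K := by
      rw [abs_mul, abs_of_pos ha]
      exact (mul_le_mul_of_nonneg_left (hs j hj) ha.le).trans had
    have hφj := hφ (a * j) haj
    rw [Complex.ofReal_mul, Complex.ofReal_intCast] at hφj
    rw [Pi.sub_apply, ← one_sub_mul, ← hφj]
    ring
  refine ⟨trigSum s' fun j => χ (a * j) * c j,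
    trigSum_mem_trigPolyOne (fun j hj => (Finset.mem_filter.1 hj).2) _, ?_⟩
  rw [hdiff]
  calc supENorm (trigSum s fun j => φ (a * j) * ((a : ℂ) ^ r * ((Complex.I * j) ^ r * c j)))
      ≤ C * supENorm (trigSum s fun j => (a : ℂ) ^ r * ((Complex.I * j) ^ r * c j)) := hC a s _
    _ = C * (‖a‖ₑ ^ r * supENorm (deriv^[r] (trigSum s c))) := by
        rw [trigSum_const_mul, ← iterate_deriv_trigSum, supENorm_const_smul, enorm_pow,
          ← ofReal_norm (a : ℂ), Complex.norm_real, ofReal_norm]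

end FourierMultipliers

section DiscreteConvolution

lemma exp_I_mul_two_pi_mul_div_eq_one_iff {N : ℕ} (hN : N ≠ 0) (l : ℤ) :
    Complex.exp (Complex.I * ((2 * Real.pi * l / N : ℝ) : ℂ)) = 1 ↔ (N : ℤ) ∣ l := by
  have hroot := (Complex.isPrimitiveRoot_exp N hN).zpow_eq_one_iff_dvd l
  rw [← Complex.exp_int_mul] at hroot
  rw [← hroot]
  congr! 2
  push_cast
  ring

lemma sum_exp_equispaced {N : ℕ} (hN : N ≠ 0) (j : ℤ) :
    ∑ k ∈ Finset.range N, Complex.exp (Complex.I * j * ((2 * Real.pi * k / N : ℝ) : ℂ)) =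
      if (N : ℤ) ∣ j then (N : ℂ) else 0 := by
  set z : ℂ := Complex.exp (Complex.I * ((2 * Real.pi * j / N : ℝ) : ℂ)) with hz
  have hpow : ∀ k : ℕ,
      Complex.exp (Complex.I * j * ((2 * Real.pi * k / N : ℝ) : ℂ)) = z ^ k := fun k => by
    rw [hz, ← Complex.exp_nat_mul]
    congr 1
    push_cast
    ring
  have hzN : z ^ N = 1 := by
    rw [hz, ← Complex.exp_nat_mul]
    refine Complex.exp_eq_one_iff.2 ⟨j, ?_⟩
    push_cast
    field_simp
  simp only [hpow]
  split_ifs with hj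
  · have hz₁ : z = 1 := (exp_I_mul_two_pi_mul_div_eq_one_iff hN j).2 hj
    simp [hz₁]
  · rw [geom_sum_eq (mt (exp_I_mul_two_pi_mul_div_eq_one_iff hN j).1 hj), hzN, sub_self, zero_div]

/-- The `j`-th discrete Fourier coefficient of the samples of `f` at the `N` equispaced nodes
`2πk/N`. -/
noncomputable def discreteFourierCoeff (N : ℕ) (f : ℝ → ℂ) (j : ℤ) : ℂ :=
  (N : ℂ)⁻¹ * ∑ k ∈ Finset.range N, f (2 * Real.pi * k / N) *
    Complex.exp (-(Complex.I * j * ((2 * Real.pi * k / N : ℝ) : ℂ)))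

lemma discreteFourierCoeff_trigSum {N : ℕ} (hN : N ≠ 0) (s : Finset ℤ) (c : ℤ → ℂ) (j : ℤ) :
    discreteFourierCoeff N (trigSum s c) j = ∑ m ∈ s, if (N : ℤ) ∣ m - j then c m else 0 := by
  have hN' : (N : ℂ) ≠ 0 := Nat.cast_ne_zero.2 hN
  have hm : ∀ m : ℤ, ∑ k ∈ Finset.range N,
      c m * Complex.exp (Complex.I * m * ((2 * Real.pi * k / N : ℝ) : ℂ)) *
        Complex.exp (-(Complex.I * j * ((2 * Real.pi * k / N : ℝ) : ℂ))) =
      N * if (N : ℤ) ∣ m - j then c m else 0 := fun m => by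
    have hite : (N * if (N : ℤ) ∣ m - j then c m else 0 : ℂ) =
        c m * if (N : ℤ) ∣ m - j then (N : ℂ) else 0 := by
      split_ifs <;> ring
    rw [hite, ← sum_exp_equispaced hN, Finset.mul_sum]
    refine Finset.sum_congr rfl fun k _ => ?_
    rw [mul_assoc, ← Complex.exp_add, Int.cast_sub]
    congr 2
    ring
  simp only [discreteFourierCoeff, trigSum, Finset.sum_mul]
  rw [Finset.sum_comm, Finset.sum_congr rfl fun m _ => hm m, ← Finset.mul_sum,
    inv_mul_cancel_left₀ hN']

/-- The discrete convolution `N⁻¹ ∑_{k<N} f(t_k) K(· − t_k)` over the nodes `t_k = 2πk/N`. -/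
noncomputable def discreteConv (N : ℕ) (f K : ℝ → ℂ) (t : ℝ) : ℂ :=
  (N : ℂ)⁻¹ * ∑ k ∈ Finset.range N, f (2 * Real.pi * k / N) * K (t - 2 * Real.pi * k / N)

variable {N : ℕ}

lemma discreteConv_sub (f g K : ℝ → ℂ) :
    discreteConv N (f - g) K = discreteConv N f K - discreteConv N g K := by
  funext t
  simp only [discreteConv, Pi.sub_apply, sub_mul, Finset.sum_sub_distrib, mul_sub]

lemma discreteConv_congr {f g : ℝ → ℂ} (K : ℝ → ℂ)
    (h : ∀ k < N, f (2 * Real.pi * k / N) = g (2 * Real.pi * k / N)) :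
    discreteConv N f K = discreteConv N g K := by
  funext t
  rw [discreteConv, discreteConv,
    Finset.sum_congr rfl fun k hk => by rw [h k (Finset.mem_range.1 hk)]]

lemma discreteConv_trigSum (f : ℝ → ℂ) (s : Finset ℤ) (κ : ℤ → ℂ) :
    discreteConv N f (trigSum s κ) = trigSum s fun j => κ j * discreteFourierCoeff N f j := by
  funext t
  simp only [discreteConv, discreteFourierCoeff, trigSum, Finset.mul_sum, Finset.sum_mul]
  rw [Finset.sum_comm]
  refine Finset.sum_congr rfl fun j _ => Finset.sum_congr rfl fun k _ => ?_
  rw [Complex.ofReal_sub, mul_sub, sub_eq_add_neg, Complex.exp_add]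
  ring

lemma discreteConv_trigSum_trigSum (hN : N ≠ 0) {s s' : Finset ℤ} (hss' : s ⊆ s')
    (h : ∀ m ∈ s, ∀ j ∈ s', (N : ℤ) ∣ m - j → m = j) (c κ : ℤ → ℂ) :
    discreteConv N (trigSum s c) (trigSum s' κ) = trigSum s fun j => κ j * c j := by
  have hcoeff : ∀ j ∈ s', discreteFourierCoeff N (trigSum s c) j = if j ∈ s then c j else 0 := by
    intro j hj
    rw [discreteFourierCoeff_trigSum hN, ← Finset.sum_ite_eq' s j c]
    refine Finset.sum_congr rfl fun m hm => if_congr ⟨h m hm j hj, ?_⟩ rfl rfl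
    rintro rfl
    simp
  rw [discreteConv_trigSum, trigSum_congr fun j hj => by rw [hcoeff j hj]]
  refine funext fun t => (Finset.sum_subset_zero_on_sdiff hss' (fun j hj => ?_) fun j hj => ?_).symm
  · simp [(Finset.mem_sdiff.1 hj).2]
  · simp [hj]

lemma discreteConv_node (hN : N ≠ 0) {K : ℝ → ℂ} (hK₀ : K 0 = N)
    (hK : ∀ l : ℤ, ¬ (N : ℤ) ∣ l → K (2 * Real.pi * l / N) = 0) (f : ℝ → ℂ) {l : ℕ} (hl : l < N) :
    discreteConv N f K (2 * Real.pi * l / N) = f (2 * Real.pi * l / N) := by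
  rw [discreteConv, Finset.sum_eq_single_of_mem l (Finset.mem_range.2 hl)]
  · rw [sub_self, hK₀, mul_comm, mul_inv_cancel_right₀ (Nat.cast_ne_zero.2 hN)]
  · intro k hk hkl
    have hdvd : ¬ (N : ℤ) ∣ (l : ℤ) - k := fun hd => hkl <| by
      have := Int.eq_zero_of_abs_lt_dvd hd (by rw [abs_lt]; have := Finset.mem_range.1 hk; omega)
      omega
    rw [← sub_div, ← mul_sub]
    exact mul_eq_zero_of_right _ (by exact_mod_cast hK _ hdvd)

lemma supENorm_discreteConv_le (hN : N ≠ 0) {K : ℝ → ℂ} {A : NNReal}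
    (hK : ∀ t, ∑ k ∈ Finset.range N, ‖K (t - 2 * Real.pi * k / N)‖ ≤ A * N) (f : ℝ → ℂ) :
    supENorm (discreteConv N f K) ≤ A * supENorm f := by
  have hN' : (N : ℝ≥0∞) ≠ 0 := Nat.cast_ne_zero.2 hN
  have hNnorm : ‖(N : ℂ)‖ₑ = N := by
    rw [← ofReal_norm, Complex.norm_natCast, ENNReal.ofReal_natCast]
  refine supENorm_le fun t => ?_
  have hsum : ∑ k ∈ Finset.range N, ‖K (t - 2 * Real.pi * k / N)‖ₑ ≤ A * N := by
    simp only [← ofReal_norm]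
    rw [← ENNReal.ofReal_sum_of_nonneg fun k _ => norm_nonneg _]
    exact (ENNReal.ofReal_le_ofReal (hK t)).trans_eq (by simp [ENNReal.ofReal_mul])
  calc ‖discreteConv N f K t‖ₑ
      ≤ (N : ℝ≥0∞)⁻¹ * ∑ k ∈ Finset.range N, supENorm f * ‖K (t - 2 * Real.pi * k / N)‖ₑ := by
        rw [discreteConv, enorm_mul, enorm_inv (Nat.cast_ne_zero.2 hN), hNnorm]
        gcongr
        refine (enorm_sum_le _ _).trans (Finset.sum_le_sum fun k _ => ?_)
        rw [enorm_mul]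
        gcongr
        exact enorm_le_supENorm f _
    _ ≤ (N : ℝ≥0∞)⁻¹ * (supENorm f * (A * N)) := by
        rw [← Finset.mul_sum]
        gcongr
    _ = A * supENorm f := by
        rw [mul_left_comm, mul_comm (A : ℝ≥0∞), ENNReal.inv_mul_cancel_left hN' (by simp), mul_comm]

lemma discreteConv_comp_add {f K : ℝ → ℂ} (hf : Function.Periodic f (2 * Real.pi))
    (hK : Function.Periodic K (2 * Real.pi)) (hN : N ≠ 0) (t : ℝ) :
    discreteConv N (fun x => f (x + 2 * Real.pi / N)) K t =
      discreteConv N f K (t + 2 * Real.pi / N) := by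
  set g : ℕ → ℂ := fun k =>
    f (2 * Real.pi * k / N) * K (t + 2 * Real.pi / N - 2 * Real.pi * k / N) with hg
  have hlast : g N = g 0 := by
    have hnode : 2 * Real.pi * N / N = 2 * Real.pi := by field_simp
    simp [hg, hnode, hK.sub_eq, hf.eq]
  have hshift : ∀ k : ℕ, f (2 * Real.pi * k / N + 2 * Real.pi / N) *
      K (t - 2 * Real.pi * k / N) = g (k + 1) := fun k => by
    simp only [hg]
    congr 2 <;> push_cast <;> ring
  have hsum : ∑ k ∈ Finset.range N, g (k + 1) = ∑ k ∈ Finset.range N, g k :=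
    add_right_cancel (b := g 0) <| by
      rw [← Finset.sum_range_succ', Finset.sum_range_succ, hlast]
  simp only [discreteConv, hshift, hsum]
  rfl

lemma discreteConv_fwdDiff_iter {f K : ℝ → ℂ} (hf : Function.Periodic f (2 * Real.pi))
    (hK : Function.Periodic K (2 * Real.pi)) (hN : N ≠ 0) (r : ℕ) :
    discreteConv N ((fwdDiff (2 * Real.pi / N))^[r] f) K =
      (fwdDiff (2 * Real.pi / N))^[r] (discreteConv N f K) := by
  induction r with
  | zero => rfl
  | succ r ih =>
    rw [Function.iterate_succ_apply', Function.iterate_succ_apply', ← ih]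
    funext t
    rw [fwdDiff, ← discreteConv_comp_add (periodic_fwdDiff_iter hf _ r) hK hN, ← Pi.sub_apply,
      ← discreteConv_sub]
    rfl

end DiscreteConvolution

section Kernel

/-- The even trigonometric sum `g 0 + 2 ∑_{1 ≤ k < M} g k cos kt`. -/
noncomputable def cosSum (g : ℕ → ℝ) (M : ℕ) (t : ℝ) : ℝ :=
  g 0 + 2 * ∑ k ∈ Finset.Ico 1 M, g k * Real.cos (k * t)

lemma cosSum_add (g g' : ℕ → ℝ) (M : ℕ) (t : ℝ) :
    cosSum (g + g') M t = cosSum g M t + cosSum g' M t := by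
  simp only [cosSum, Pi.add_apply, add_mul, Finset.sum_add_distrib]
  ring

lemma cosSum_smul (a : ℝ) (g : ℕ → ℝ) (M : ℕ) (t : ℝ) :
    cosSum (a • g) M t = a * cosSum g M t := by
  simp only [cosSum, Pi.smul_apply, smul_eq_mul, mul_assoc, ← Finset.mul_sum]
  ring

lemma cosSum_eq_of_le {g : ℕ → ℝ} {m M : ℕ} (hmM : m ≤ M) (hg : ∀ k, m ≤ k → g k = 0) (t : ℝ) :
    cosSum g m t = cosSum g M t := by
  rw [cosSum, cosSum, Finset.sum_subset (Finset.Ico_subset_Ico_right hmM) fun k hk hk' => ?_]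
  rw [hg k (by simp only [Finset.mem_Ico] at hk hk'; omega), zero_mul]

lemma ofReal_cosSum (g : ℕ → ℝ) {M : ℕ} (hM : 0 < M) (t : ℝ) :
    (cosSum g M t : ℂ) = trigSum (Finset.Ioo (-M : ℤ) M) (fun j => g j.natAbs) t := by
  induction M, hM using Nat.le_induction with
  | base =>
    have hset : Finset.Ioo (-(0 + 1 : ℕ) : ℤ) (0 + 1 : ℕ) = {0} := by ext; simp; omega
    rw [hset]
    simp [cosSum, trigSum]
  | succ M hM ih =>
    have hset : Finset.Ioo (-(M + 1 : ℕ) : ℤ) (M + 1 : ℕ) =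
        insert (M : ℤ) (insert (-M : ℤ) (Finset.Ioo (-M : ℤ) M)) := by
      ext; simp; omega
    rw [trigSum, hset, Finset.sum_insert (by simp; omega), Finset.sum_insert (by simp), ← trigSum,
      ← ih]
    simp only [cosSum, Finset.sum_Ico_succ_top hM, Int.natAbs_neg, Int.natAbs_natCast]
    push_cast
    rw [Complex.cos, show (Complex.I * M * t : ℂ) = M * t * Complex.I by ring,
      show (Complex.I * -M * t : ℂ) = -(M * t) * Complex.I by ring]
    ring

lemma sum_cosSum_equispaced (g : ℕ → ℝ) {M N : ℕ} (hM : 0 < M) (hMN : M ≤ N) (t : ℝ) :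
    ∑ k ∈ Finset.range N, cosSum g M (t - 2 * Real.pi * k / N) = N * g 0 := by
  have hN : (N : ℂ) ≠ 0 := by exact_mod_cast (hM.trans_le hMN).ne'
  have hconv := congrFun (discreteConv_trigSum_trigSum (N := N) (s := {0})
    (s' := Finset.Ioo (-M : ℤ) M) (by omega) (by simpa using hM) (fun m hm j hj hd => by
      rw [Finset.mem_singleton] at hm
      rw [Finset.mem_Ioo] at hj
      exact sub_eq_zero.1 (Int.eq_zero_of_abs_lt_dvd hd (by rw [abs_lt]; omega)))
    1 fun j => g j.natAbs) t
  simp only [discreteConv, ← ofReal_cosSum g hM] at hconv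
  rw [inv_mul_eq_iff_eq_mul₀ hN] at hconv
  simp only [trigSum, Finset.sum_singleton, Pi.one_apply, Int.cast_zero, mul_zero, zero_mul,
    Complex.exp_zero, mul_one, one_mul, Int.natAbs_zero] at hconv
  exact_mod_cast hconv

/-- `m` times the Fejér kernel `∑_{|k| < m} (1 - |k|/m) cos kt`. The truncated subtraction makes
the weights vanish beyond `m`. -/
noncomputable def fejerSum (m : ℕ) (t : ℝ) : ℝ :=
  cosSum (fun k => (m - k : ℕ)) m t

lemma fejerSum_succ (m : ℕ) (t : ℝ) :
    fejerSum (m + 1) t = fejerSum m t + cosSum 1 (m + 1) t := by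
  rw [fejerSum, fejerSum, cosSum_eq_of_le m.le_succ fun k hk => by simp [hk], ← cosSum_add]
  simp only [cosSum]
  congr 2
  · simp
  · refine Finset.sum_congr rfl fun k hk => ?_
    rw [Finset.mem_Ico] at hk
    rw [Pi.add_apply, Pi.one_apply, Nat.succ_sub (by omega), Nat.cast_succ]

lemma re_sum_exp_mul_conj_exp (m : ℕ) (t : ℝ) :
    ((∑ j ∈ Finset.range m, Complex.exp (Complex.I * j * t)) *
      starRingEnd ℂ (Complex.exp (Complex.I * m * t))).re =
        ∑ k ∈ Finset.Ico 1 (m + 1), Real.cos (k * t) := by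
  rw [Finset.sum_mul, Complex.re_sum, Finset.sum_Ico_eq_sum_range, Nat.add_sub_cancel,
    ← Finset.sum_range_reflect (fun j => Real.cos ((1 + j : ℕ) * t))]
  refine Finset.sum_congr rfl fun j hj => ?_
  rw [Finset.mem_range] at hj
  have hexp : Complex.I * j * t + starRingEnd ℂ (Complex.I * m * t) =
      ((-((m - j) * t) : ℝ) : ℂ) * Complex.I := by
    simp
    ring
  rw [← Complex.exp_conj, ← Complex.exp_add, hexp, Complex.exp_ofReal_mul_I_re, Real.cos_neg,
    show 1 + (m - 1 - j) = m - j by omega, Nat.cast_sub hj.le]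

lemma fejerSum_eq_normSq (m : ℕ) (t : ℝ) :
    fejerSum m t =
      Complex.normSq (∑ j ∈ Finset.range m, Complex.exp (Complex.I * j * t)) := by
  induction m with
  | zero => simp [fejerSum, cosSum]
  | succ m ih =>
    have hnorm : Complex.normSq (Complex.exp (Complex.I * m * t)) = 1 := by
      rw [Complex.normSq_eq_norm_sq, show (Complex.I * m * t : ℂ) = ((m * t : ℝ) : ℂ) * Complex.I by
        push_cast; ring, Complex.norm_exp_ofReal_mul_I, one_pow]
    rw [fejerSum_succ, Finset.sum_range_succ, Complex.normSq_add, ← ih, hnorm,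
      re_sum_exp_mul_conj_exp]
    simp only [cosSum, Pi.one_apply, one_mul, add_assoc]

lemma fejerSum_nonneg (m : ℕ) (t : ℝ) : 0 ≤ fejerSum m t := by
  rw [fejerSum_eq_normSq]
  exact Complex.normSq_nonneg _

lemma sum_fejerSum_equispaced {m N : ℕ} (hm : 0 < m) (hmN : m ≤ N) (t : ℝ) :
    ∑ k ∈ Finset.range N, fejerSum m (t - 2 * Real.pi * k / N) = N * m :=
  sum_cosSum_equispaced _ hm hmN t

lemma fejerSum_zero (m : ℕ) : fejerSum m 0 = m ^ 2 := by
  simp [fejerSum_eq_normSq, Complex.normSq_apply, sq]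

/-- The trapezoidal Fourier coefficients of the doubled kernel `2 K_n`: equal to `1` up to `2n`,
then decreasing linearly to `0` at `4n`. The truncated subtractions encode the positive parts. -/
noncomputable def vdpCoeff (n k : ℕ) : ℝ :=
  ((4 * n - k : ℕ) - (2 * n - k : ℕ)) / (2 * n)

variable {n : ℕ}

lemma vdpCoeff_of_le (hn : 0 < n) {k : ℕ} (hk : k ≤ 2 * n) : vdpCoeff n k = 1 := by
  have hn' : (n : ℝ) ≠ 0 := by positivity
  rw [vdpCoeff, Nat.cast_sub (by omega), Nat.cast_sub hk]
  push_cast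
  field_simp
  ring

lemma vdpCoeff_of_ge {k : ℕ} (hk : 2 * n ≤ k) (hk' : k ≤ 4 * n) :
    vdpCoeff n k = (4 * n - k) / (2 * n) := by
  rw [vdpCoeff, Nat.cast_sub hk', Nat.sub_eq_zero_of_le hk]
  simp

lemma two_mul_vdpInterpKernel (hn : 0 < n) (t : ℝ) :
    2 * vdpInterpKernel n t = cosSum (vdpCoeff n) (4 * n) t := by
  have hlow : ∑ k ∈ Finset.Icc 1 (2 * n), Real.cos (k * t) =
      ∑ k ∈ Finset.Ico 1 (2 * n + 1), vdpCoeff n k * Real.cos (k * t) :=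
    Finset.sum_congr rfl fun k hk => by
      rw [vdpCoeff_of_le hn (Finset.mem_Icc.1 hk).2, one_mul]
  have hhigh : ∑ k ∈ Finset.Icc (2 * n + 1) (4 * n - 1),
      ((4 * n : ℝ) - k) / (2 * n) * Real.cos (k * t) =
      ∑ k ∈ Finset.Ico (2 * n + 1) (4 * n), vdpCoeff n k * Real.cos (k * t) := by
    refine Finset.sum_congr (by ext; simp; omega) fun k hk => ?_
    rw [Finset.mem_Ico] at hk
    rw [vdpCoeff_of_ge (by omega) hk.2.le]
  rw [vdpInterpKernel, cosSum, hlow, hhigh, add_assoc,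
    Finset.sum_Ico_consecutive _ (by omega) (by omega), vdpCoeff_of_le hn (Nat.zero_le _)]
  ring

lemma vdpInterpKernel_eq_fejerSum (hn : 0 < n) (t : ℝ) :
    4 * n * vdpInterpKernel n t = fejerSum (4 * n) t - fejerSum (2 * n) t := by
  have hn' : (n : ℝ) ≠ 0 := by positivity
  have hcoeff : (2 * n : ℝ) • vdpCoeff n + (fun k => ((2 * n - k : ℕ) : ℝ)) =
      fun k => ((4 * n - k : ℕ) : ℝ) := by
    funext k
    simp only [Pi.add_apply, Pi.smul_apply, smul_eq_mul, vdpCoeff]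
    field_simp
    ring
  rw [eq_sub_iff_add_eq, show 4 * n * vdpInterpKernel n t = 2 * n * (2 * vdpInterpKernel n t) by
    ring, two_mul_vdpInterpKernel hn, fejerSum, fejerSum,
    cosSum_eq_of_le (show 2 * n ≤ 4 * n by omega) fun k hk => by simp [hk], ← cosSum_smul,
    ← cosSum_add, hcoeff]

lemma sum_abs_vdpInterpKernel_le (hn : 0 < n) (t : ℝ) :
    ∑ k ∈ Finset.range (6 * n), |vdpInterpKernel n (t - 2 * Real.pi * k / (6 * n : ℕ))| ≤
      9 * n := by
  have hle : ∀ u, |vdpInterpKernel n u| ≤ (fejerSum (4 * n) u + fejerSum (2 * n) u) / (4 * n) := by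
    intro u
    rw [le_div_iff₀ (by positivity), mul_comm, ← abs_of_pos (show (0 : ℝ) < 4 * n by positivity),
      ← abs_mul, vdpInterpKernel_eq_fejerSum hn]
    exact (abs_sub _ _).trans_eq <| by
      rw [abs_of_nonneg (fejerSum_nonneg _ u), abs_of_nonneg (fejerSum_nonneg _ u)]
  calc ∑ k ∈ Finset.range (6 * n), |vdpInterpKernel n (t - 2 * Real.pi * k / (6 * n : ℕ))|
      ≤ _ := Finset.sum_le_sum fun k _ => hle _
    _ = ((6 * n : ℕ) * (4 * n : ℕ) + (6 * n : ℕ) * (2 * n : ℕ)) / (4 * n : ℝ) := by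
        rw [← Finset.sum_div, Finset.sum_add_distrib, sum_fejerSum_equispaced (by omega) (by omega),
          sum_fejerSum_equispaced (by omega) (by omega)]
    _ = 9 * n := by
        push_cast
        field_simp
        ring

lemma vdpInterpKernel_zero (hn : 0 < n) : vdpInterpKernel n 0 = 3 * n := by
  have hn' : (4 * n : ℝ) ≠ 0 := by positivity
  refine mul_left_cancel₀ hn' ?_
  rw [vdpInterpKernel_eq_fejerSum hn, fejerSum_zero, fejerSum_zero]
  push_cast
  ring

/-- For `z⁶ⁿ = 1` one has `z⁴ⁿ - 1 = -z⁴ⁿ (z²ⁿ - 1)`, so at a node the two Fejér sums agree. -/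
lemma vdpInterpKernel_node_eq_zero (hn : 0 < n) {l : ℤ} (hl : ¬ ((6 * n : ℕ) : ℤ) ∣ l) :
    vdpInterpKernel n (2 * Real.pi * l / (6 * n : ℕ)) = 0 := by
  set t : ℝ := 2 * Real.pi * l / (6 * n : ℕ)
  set z := Complex.exp (Complex.I * t) with hz
  have hz₁ : z ≠ 1 := mt (exp_I_mul_two_pi_mul_div_eq_one_iff (by omega) l).1 hl
  have hpow : ∀ j : ℕ, Complex.exp (Complex.I * j * t) = z ^ j := fun j => by
    rw [hz, ← Complex.exp_nat_mul]
    congr 1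
    ring
  have hz₆ : z ^ (6 * n) = 1 := by
    rw [← hpow, Complex.exp_eq_one_iff]
    have hn₀ : (n : ℂ) ≠ 0 := Nat.cast_ne_zero.2 hn.ne'
    refine ⟨l, ?_⟩
    simp only [t]
    push_cast
    field_simp
  have hnorm : ‖z‖ = 1 := by rw [hz, mul_comm, Complex.norm_exp_ofReal_mul_I]
  have hz₄ : z ^ (4 * n) - 1 = -z ^ (4 * n) * (z ^ (2 * n) - 1) := by
    linear_combination hz₆
  have hn' : (4 * n : ℝ) ≠ 0 := by positivity
  refine (mul_eq_zero.1 ?_).resolve_left hn'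
  rw [vdpInterpKernel_eq_fejerSum hn, fejerSum_eq_normSq, fejerSum_eq_normSq]
  simp only [hpow, geom_sum_eq hz₁, hz₄, Complex.normSq_eq_norm_sq, norm_div, norm_mul, norm_neg,
    norm_pow, hnorm, one_pow, one_mul, sub_self]

end Kernel

section Interpolation

variable {n : ℕ}

lemma vdpInterp_eq_discreteConv (n : ℕ) (f : ℝ → ℂ) :
    vdpInterp n f = discreteConv (6 * n) f fun t => ((2 * vdpInterpKernel n t : ℝ) : ℂ) := by
  have hnode : ∀ k : ℕ, Real.pi * k / (3 * n) = 2 * Real.pi * k / (6 * n : ℕ) := fun k => by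
    push_cast
    rw [show (6 * n : ℝ) = 2 * (3 * n) by ring, mul_assoc, mul_div_mul_left _ _ two_ne_zero]
  funext t
  simp only [vdpInterp, discreteConv, hnode, Complex.real_smul, Finset.mul_sum]
  refine Finset.sum_congr rfl fun k _ => ?_
  push_cast
  rw [show (6 * n : ℂ) = 2 * (3 * n) by ring, mul_inv]
  ring

lemma ofReal_two_mul_vdpInterpKernel (hn : 0 < n) :
    (fun t => ((2 * vdpInterpKernel n t : ℝ) : ℂ)) =
      trigSum (Finset.Ioo (-(4 * n : ℕ) : ℤ) (4 * n : ℕ)) fun j => vdpCoeff n j.natAbs := by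
  funext t
  rw [two_mul_vdpInterpKernel hn, ofReal_cosSum _ (by omega)]

lemma vdpInterp_mem_trigPolyOne (hn : 0 < n) (f : ℝ → ℂ) :
    vdpInterp n f ∈ TrigPolyOne (4 * n) := by
  rw [vdpInterp_eq_discreteConv, ofReal_two_mul_vdpInterpKernel hn, discreteConv_trigSum]
  refine trigSum_mem_trigPolyOne (fun j hj => ?_) _
  rw [Finset.mem_Ioo, ← abs_lt] at hj
  exact_mod_cast hj.le

lemma contDiff_vdpInterp (hn : 0 < n) (f : ℝ → ℂ) (m : WithTop ℕ∞) :
    ContDiff ℝ m (vdpInterp n f) := by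
  obtain ⟨s, c, -, hV⟩ := mem_trigPolyOne_iff.1 (vdpInterp_mem_trigPolyOne hn f)
  rw [hV]
  exact contDiff_trigSum s c

lemma vdpInterp_eq_self (hn : 0 < n) {T : ℝ → ℂ} (hT : T ∈ TrigPolyOne (2 * n)) :
    vdpInterp n T = T := by
  obtain ⟨s, c, hs, rfl⟩ := mem_trigPolyOne_iff.1 hT
  have hs' : ∀ j ∈ s, |j| ≤ 2 * n := fun j hj => by exact_mod_cast hs j hj
  rw [vdpInterp_eq_discreteConv, ofReal_two_mul_vdpInterpKernel hn,
    discreteConv_trigSum_trigSum (by omega)]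
  · refine trigSum_congr fun j hj => ?_
    rw [vdpCoeff_of_le hn (by have := abs_le.1 (hs' j hj); omega), Complex.ofReal_one, one_mul]
  · intro j hj
    have := abs_le.1 (hs' j hj)
    rw [Finset.mem_Ioo]
    omega
  · intro m hm j hj hd
    have := abs_le.1 (hs' m hm)
    rw [Finset.mem_Ioo] at hj
    exact sub_eq_zero.1 (Int.eq_zero_of_abs_lt_dvd hd (by rw [abs_lt]; omega))

lemma vdpInterp_sub (f g : ℝ → ℂ) : vdpInterp n (f - g) = vdpInterp n f - vdpInterp n g := by
  simp only [vdpInterp_eq_discreteConv, discreteConv_sub]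

lemma vdpInterp_node (hn : 0 < n) (f : ℝ → ℂ) {l : ℕ} (hl : l < 6 * n) :
    vdpInterp n f (2 * Real.pi * l / (6 * n : ℕ)) = f (2 * Real.pi * l / (6 * n : ℕ)) := by
  rw [vdpInterp_eq_discreteConv]
  refine discreteConv_node (by omega) ?_ (fun m hm => ?_) f hl
  · rw [vdpInterpKernel_zero hn]
    push_cast
    ring
  · rw [vdpInterpKernel_node_eq_zero hn hm, mul_zero, Complex.ofReal_zero]

lemma vdpInterp_vdpInterp_two_mul (hn : 0 < n) (f : ℝ → ℂ) :
    vdpInterp n (vdpInterp (2 * n) f) = vdpInterp n f := by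
  rw [vdpInterp_eq_discreteConv n, vdpInterp_eq_discreteConv n]
  refine discreteConv_congr _ fun k hk => ?_
  have hnode : 2 * Real.pi * k / (6 * n : ℕ) = 2 * Real.pi * (2 * k : ℕ) / (6 * (2 * n) : ℕ) := by
    push_cast
    field_simp
  rw [hnode, vdpInterp_node (by omega) f (by omega)]

lemma supENorm_vdpInterp_le (hn : 0 < n) (f : ℝ → ℂ) :
    supENorm (vdpInterp n f) ≤ 3 * supENorm f := by
  rw [vdpInterp_eq_discreteConv]
  refine supENorm_discreteConv_le (A := 3) (by omega) (fun t => ?_) f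
  simp only [Complex.norm_real, Real.norm_eq_abs, abs_mul, ← Finset.mul_sum, abs_two]
  have := sum_abs_vdpInterpKernel_le hn t
  push_cast at this ⊢
  linarith

lemma vdpInterp_fwdDiff_iter (hn : 0 < n) {f : ℝ → ℂ} (hf : Periodic2PiOne f) (r : ℕ) :
    vdpInterp n ((fwdDiff (2 * Real.pi / (6 * n : ℕ)))^[r] f) =
      (fwdDiff (2 * Real.pi / (6 * n : ℕ)))^[r] (vdpInterp n f) := by
  simp only [vdpInterp_eq_discreteConv, ofReal_two_mul_vdpInterpKernel hn]
  exact discreteConv_fwdDiff_iter hf (periodic_trigSum _ _) (by omega) r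

lemma supENorm_sub_vdpInterp_le (hn : 0 < n) (f : ℝ → ℂ) {Q : ℝ → ℂ}
    (hQ : Q ∈ TrigPolyOne (2 * n)) : supENorm (f - vdpInterp n f) ≤ 4 * supENorm (f - Q) := by
  have hsplit : f - vdpInterp n f = (f - Q) - vdpInterp n (f - Q) := by
    rw [vdpInterp_sub, vdpInterp_eq_self hn hQ]
    abel
  calc supENorm (f - vdpInterp n f)
      ≤ supENorm (f - Q) + supENorm (vdpInterp n (f - Q)) := by
        rw [hsplit]
        exact supENorm_sub_le _ _
    _ ≤ supENorm (f - Q) + 3 * supENorm (f - Q) := by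
        gcongr
        exact supENorm_vdpInterp_le hn _
    _ = 4 * supENorm (f - Q) := by ring

lemma tendsto_vdpInterp {f : ℝ → ℂ} (hf : Continuous f) (hp : Periodic2PiOne f) (x : ℝ) :
    Filter.Tendsto (fun n => vdpInterp n f x) Filter.atTop (nhds (f x)) := by
  refine Metric.tendsto_atTop.2 fun ε hε => ?_
  obtain ⟨d, T, hT, hfT⟩ := exists_trigPolyOne_supENorm_sub_le hf hp (ε := ε / 5) (by positivity)
  obtain ⟨s, c, hs, hTs⟩ := hT
  refine ⟨⌈d⌉₊ + 1, fun n hn => ?_⟩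
  have hn₀ : 0 < n := by omega
  have hdn : d ≤ 2 * n := by
    have : (⌈d⌉₊ : ℝ) ≤ n := by exact_mod_cast (Nat.le_succ _).trans hn
    linarith [Nat.le_ceil d, (Nat.cast_nonneg n : (0 : ℝ) ≤ n)]
  have herr : supENorm (f - vdpInterp n f) ≤ ENNReal.ofReal (4 * (ε / 5)) := by
    refine (supENorm_sub_vdpInterp_le hn₀ f ⟨s, c, fun k hk => (hs k hk).trans hdn, hTs⟩).trans ?_
    rw [ENNReal.ofReal_mul (by norm_num), ENNReal.ofReal_ofNat]
    gcongr
  have hx := (supENorm_le_ofReal_iff (by positivity)).1 herr x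
  rw [dist_comm, dist_eq_norm]
  exact hx.trans_lt (by linarith)

end Interpolation

section DerivativeEstimates

/-- The quantity `n^{-r} ‖(V_n f)^{(r)}‖_∞`, which controls the smoothness of `f` at scale `1/n`. -/
noncomputable def scaledDerivNorm (r : ℕ) (f : ℝ → ℂ) (n : ℕ) : ℝ≥0∞ :=
  ‖(1 / n : ℝ)‖ₑ ^ r * supENorm (deriv^[r] (vdpInterp n f))

lemma exists_supENorm_vdpInterp_two_mul_sub_le (r : ℕ) :
    ∃ C : NNReal, ∀ n : ℕ, 0 < n → ∀ f : ℝ → ℂ,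
      supENorm (vdpInterp (2 * n) f - vdpInterp n f) ≤
        C * scaledDerivNorm r f (2 * n) := by
  obtain ⟨C, hC⟩ := exists_supENorm_sub_trigPolyOne_inv_le r (K := 4) (by norm_num)
  refine ⟨4 * C, fun n hn f => ?_⟩
  obtain ⟨Q, hQ, hle⟩ := hC (1 / (2 * n : ℕ)) (4 * (2 * n : ℕ)) (by positivity)
    (by field_simp; rfl) _ (vdpInterp_mem_trigPolyOne (by omega) f)
  rw [one_div, inv_inv, Nat.cast_mul, Nat.cast_two] at hQ
  rw [← vdpInterp_vdpInterp_two_mul hn f]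
  calc supENorm (vdpInterp (2 * n) f - vdpInterp n (vdpInterp (2 * n) f))
      ≤ 4 * supENorm (vdpInterp (2 * n) f - Q) := supENorm_sub_vdpInterp_le hn _ hQ
    _ ≤ _ := by
        rw [ENNReal.coe_mul, ENNReal.coe_ofNat, mul_assoc]
        gcongr
        exact hle

lemma exists_scaledDerivNorm_le_modSmoothOne_top (r : ℕ) :
    ∃ C : NNReal, ∀ n : ℕ, 0 < n → ∀ f : ℝ → ℂ, Continuous f → Periodic2PiOne f →
      scaledDerivNorm r f n ≤ C * modSmoothOne r ∞ f (1 / n) := by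
  obtain ⟨C, hC⟩ := exists_enorm_pow_mul_supENorm_iterate_deriv_le r (ρ := 4 * Real.pi / 3)
    (by positivity) (by linarith [Real.pi_pos])
  refine ⟨C * (3 * 2 ^ r), fun n hn f hf hp => ?_⟩
  set h : ℝ := 2 * Real.pi / (6 * n : ℕ) with hh
  have hh_eq : h = Real.pi / 3 * (1 / n) := by
    rw [hh]
    push_cast
    field_simp
    ring
  have hh₀ : 0 < h := by rw [hh_eq]; positivity
  have hn_inv : (0 : ℝ) < 1 / n := by positivity
  have hlow : 1 / n ≤ h := by rw [hh_eq]; nlinarith [Real.pi_gt_three]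
  have hhigh : |h| ≤ 2 * (1 / n) := by
    rw [abs_of_pos hh₀, hh_eq]
    nlinarith [Real.pi_lt_four]
  have hd : |h| * (4 * n) ≤ 4 * Real.pi / 3 := by
    rw [abs_of_pos hh₀, hh_eq]
    exact le_of_eq (by field_simp)
  calc scaledDerivNorm r f n
      ≤ ‖h‖ₑ ^ r * supENorm (deriv^[r] (vdpInterp n f)) := by
        rw [scaledDerivNorm]
        gcongr
        rw [Real.enorm_of_nonneg hn_inv.le, Real.enorm_of_nonneg hh₀.le]
        exact ENNReal.ofReal_le_ofReal hlow
    _ ≤ C * supENorm (vdpInterp n ((fwdDiff h)^[r] f)) := by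
        rw [vdpInterp_fwdDiff_iter hn hp]
        exact hC h _ hd _ (vdpInterp_mem_trigPolyOne hn f)
    _ ≤ C * (3 * (2 ^ r * modSmoothOne r ∞ f (1 / n))) := by
        gcongr
        refine (supENorm_vdpInterp_le hn _).trans ?_
        gcongr
        exact supENorm_fwdDiff_iter_le_modSmoothOne_top hf hp r hhigh
    _ = _ := by
        push_cast
        ring

lemma exists_supENorm_sub_vdpInterp_two_pow_le_tsum (r : ℕ) :
    ∃ C : NNReal, ∀ f : ℝ → ℂ, Continuous f → Periodic2PiOne f → ∀ n : ℕ,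
      supENorm (f - vdpInterp (2 ^ n) f) ≤ C * ∑' k, scaledDerivNorm r f (2 ^ (n + k)) := by
  obtain ⟨C, hC⟩ := exists_supENorm_vdpInterp_two_mul_sub_le r
  refine ⟨C, fun f hf hp n => ?_⟩
  set g : ℕ → ℝ → ℂ := fun k => vdpInterp (2 ^ (n + k)) f
  have hindex : Filter.Tendsto (fun k : ℕ => 2 ^ (n + k)) Filter.atTop Filter.atTop :=
    (tendsto_pow_atTop_atTop_of_one_lt one_lt_two).comp <|
      Filter.tendsto_atTop_mono (fun k => k.le_add_left n) Filter.tendsto_id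
  calc supENorm (f - g 0)
      ≤ ∑' k, supENorm (g (k + 1) - g k) :=
        supENorm_sub_le_tsum fun x => (tendsto_vdpInterp hf hp x).comp hindex
    _ ≤ ∑' k, C * scaledDerivNorm r f (2 ^ (n + (k + 1))) := by
        refine ENNReal.tsum_le_tsum fun k => ?_
        have hstep := hC (2 ^ (n + k)) (by positivity) f
        rwa [← pow_succ'] at hstep
    _ ≤ C * ∑' k, scaledDerivNorm r f (2 ^ (n + k)) := by
        rw [ENNReal.tsum_mul_left]
        exact mul_le_mul_right (ENNReal.tsum_comp_le_tsum_of_injective (add_left_injective 1)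
          fun k => scaledDerivNorm r f (2 ^ (n + k))) _

lemma exists_modSmoothOne_top_le_tsum (r : ℕ) :
    ∃ C : NNReal, ∀ f : ℝ → ℂ, Continuous f → Periodic2PiOne f → ∀ n : ℕ,
      modSmoothOne r ∞ f (1 / 2 ^ n) ≤ C * ∑' k, scaledDerivNorm r f (2 ^ (n + 1 + k)) := by
  obtain ⟨C, hC⟩ := exists_supENorm_sub_vdpInterp_two_pow_le_tsum r
  refine ⟨2 ^ r * C + 2 ^ r, fun f hf hp n => ?_⟩
  set S := ∑' k, scaledDerivNorm r f (2 ^ (n + 1 + k))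
  set g := vdpInterp (2 ^ (n + 1)) f
  have hscale : ‖(1 / 2 ^ n : ℝ)‖ₑ = 2 * ‖(1 / (2 ^ (n + 1) : ℕ) : ℝ)‖ₑ := by
    rw [show (1 / 2 ^ n : ℝ) = 2 * (1 / (2 ^ (n + 1) : ℕ)) by push_cast; rw [pow_succ]; field_simp,
      enorm_mul, Real.enorm_of_nonneg zero_le_two, ENNReal.ofReal_ofNat]
  have hfirst : scaledDerivNorm r f (2 ^ (n + 1)) ≤ S := ENNReal.le_tsum 0
  calc modSmoothOne r ∞ f (1 / 2 ^ n)
      ≤ 2 ^ r * supENorm (f - g) + ‖(1 / 2 ^ n : ℝ)‖ₑ ^ r * supENorm (deriv^[r] g) :=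
        modSmoothOne_top_le f (contDiff_vdpInterp (by positivity) f _) _
    _ = 2 ^ r * supENorm (f - g) + 2 ^ r * scaledDerivNorm r f (2 ^ (n + 1)) := by
        rw [hscale, mul_pow, mul_assoc, scaledDerivNorm]
    _ ≤ 2 ^ r * (C * S) + 2 ^ r * S := by
        gcongr
        exact hC f hf hp (n + 1)
    _ = _ := by
        push_cast
        ring

lemma two_rpow_mul_eLpNorm_eq_scaledDerivNorm (r m : ℕ) (f : ℝ → ℂ) :
    (2 : ℝ≥0∞) ^ (-((m * r : ℕ) : ℝ)) *
      eLpNorm (deriv^[r] (vdpInterp (2 ^ m) f)) ∞ circleMeasure = scaledDerivNorm r f (2 ^ m) := by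
  have hweight : (2 : ℝ≥0∞) ^ (-((m * r : ℕ) : ℝ)) = ‖(1 / (2 ^ m : ℕ) : ℝ)‖ₑ ^ r := by
    rw [ENNReal.rpow_neg, ENNReal.rpow_natCast, pow_mul, one_div, enorm_inv (by positivity),
      ENNReal.inv_pow, Real.enorm_natCast]
    push_cast
    rfl
  obtain ⟨s, c, -, hV⟩ := mem_trigPolyOne_iff.1
    (vdpInterp_mem_trigPolyOne (n := 2 ^ m) (by positivity) f)
  rw [scaledDerivNorm, hweight, hV, iterate_deriv_trigSum,
    eLpNorm_top_circleMeasure (contDiff_trigSum (n := 0) s _).continuous (periodic_trigSum s _)]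

end DerivativeEstimates

/-- For `f ∈ C(𝕋)` and `r, n ∈ ℕ`,
`2^{-nr} ‖(V_{2^n}f)^{(r)}‖_∞ ≲ ω_r(f,2^{-n})_∞ ≲ ∑_{k=n+1}^∞ 2^{-kr} ‖(V_{2^k}f)^{(r)}‖_∞`. -/
theorem stmt13 (r : ℕ) (hr : 0 < r) :
    ∃ C : ℝ≥0∞, 0 < C ∧ C ≠ ∞ ∧
      ∀ f : ℝ → ℂ, Continuous f → Periodic2PiOne f →
        ∀ n : ℕ, 1 ≤ n →
          (2 : ℝ≥0∞) ^ (-((n * r : ℕ) : ℝ)) *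
              eLpNorm (deriv^[r] (vdpInterp (2 ^ n) f)) ∞ circleMeasure
            ≤ C * modSmoothOne r ∞ f (1 / 2 ^ n) ∧
          modSmoothOne r ∞ f (1 / 2 ^ n)
            ≤ C * ∑' k : ℕ,
                (2 : ℝ≥0∞) ^ (-(((n + 1 + k) * r : ℕ) : ℝ)) *
                  eLpNorm (deriv^[r] (vdpInterp (2 ^ (n + 1 + k)) f)) ∞ circleMeasure := by
  obtain ⟨C₁, hC₁⟩ := exists_scaledDerivNorm_le_modSmoothOne_top r
  obtain ⟨C₂, hC₂⟩ := exists_modSmoothOne_top_le_tsum r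
  refine ⟨C₁ + C₂ + 1, by positivity, by finiteness, fun f hf hp n _ => ?_⟩
  simp only [two_rpow_mul_eLpNorm_eq_scaledDerivNorm]
  constructor
  · calc scaledDerivNorm r f (2 ^ n) ≤ C₁ * modSmoothOne r ∞ f (1 / 2 ^ n) := by
          simpa using hC₁ (2 ^ n) (by positivity) f hf hp
      _ ≤ (C₁ + C₂ + 1) * modSmoothOne r ∞ f (1 / 2 ^ n) := by
          gcongr
          exact le_self_add.trans le_self_add
  · refine (hC₂ f hf hp n).trans ?_
    gcongr
    exact le_add_self.trans le_self_add
end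

section
/- Let f ∈ L_1(𝕋) have a lacunary Fourier series (f ∈ Λ) and let α > 0. Then for every n ∈ ℕ, ω_α(f, 2^{-n})_{L_1(𝕋)} ≍ (Σ_{k=n}^∞ 2^{-2αk}‖(η_{2^k}f)^{(α)}‖_{L_1(𝕋)}²)^{1/2}, with implicit constants independent of f and n. -/
open scoped ENNReal
open MeasureTheory

/-- Fourier coefficient `\hat f(m) = (2π)^{-1} ∫_𝕋 f(x) e^{-imx} dx`. -/
noncomputable def fourierCoeffOne (f : ℝ → ℂ) (m : ℤ) : ℂ :=
  (1 / (2 * Real.pi) : ℝ) •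
    ∫ x, f x * Complex.exp (-(Complex.I * m * x)) ∂circleMeasure

/-- `f` has lacunary Fourier series: `\hat f(m) = 0` unless `|m|` is a power of `2`. -/
def LacunaryFourier (f : ℝ → ℂ) : Prop :=
  ∀ m : ℤ, (∀ j : ℕ, m.natAbs ≠ 2 ^ j) → fourierCoeffOne f m = 0

/-- Generalized binomial coefficient `binom(α,ν) = α(α−1)⋯(α−ν+1)/ν!`. -/
noncomputable def gBinom (α : ℝ) : ℕ → ℝ
  | 0 => 1
  | n + 1 => gBinom α n * (α - n) / (n + 1)

/-- Fractional difference `Δ_h^α f(x) = ∑_{ν=0}^∞ (−1)^ν binom(α,ν) f(x + (α−ν)h)`. -/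
noncomputable def fracDiffOne (α : ℝ) (h : ℝ) (f : ℝ → ℂ) : ℝ → ℂ :=
  fun x => ∑' ν : ℕ, ((-1 : ℝ) ^ ν * gBinom α ν) • f (x + (α - ν) * h)

/-- Fractional modulus of smoothness `ω_α(f,δ)_p = sup_{|h|≤δ} ‖Δ_h^α f‖_{L_p(𝕋)}`. -/
noncomputable def fracModSmoothOne (α : ℝ) (p : ℝ≥0∞) (f : ℝ → ℂ) (δ : ℝ) : ℝ≥0∞ :=
  ⨆ h : {h : ℝ // |h| ≤ δ}, eLpNorm (fracDiffOne α h.1 f) p circleMeasure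

/-- The Weyl derivative of order `α` of the de la Vallée Poussin mean `η_N f`:
`(η_N f)^{(α)}(x) = ∑_{m≠0} (im)^α η(|m|/N) \hat f(m) e^{imx}`. -/
noncomputable def vdpWeylOne (η : ℝ → ℝ) (α : ℝ) (N : ℕ) (f : ℝ → ℂ) : ℝ → ℂ :=
  fun x => ∑' m : ℤ,
    (if m = 0 then 0 else (Complex.I * (m : ℂ)) ^ (α : ℂ)) *
      ((η (|(m : ℝ)| / N) : ℝ) : ℂ) * fourierCoeffOne f m * Complex.exp (Complex.I * m * x)

/-!
On lacunary series the `L₁` and `L₂` norms are comparable: `‖g‖₁ ≤ ‖g‖₂` always, and for the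
converse one integrates `g` against a Riesz product `∏ (1 + i Re (b_k e_{N_k}))`. Its sup norm is
at most `∏ (1 + |b_k|²)^{1/2} ≤ e^{1/2}` when `∑ |b_k|² ≤ 1`. If the `N_k` are powers of two spaced
by factors of at least `4`, then among the frequencies of the product only the `± N_k` lie in the
spectrum of `g`, so the integral is a linear form in `ĝ(± N_k)`, and duality in `ℓ²` bounds
`∑ |ĝ(± N_k)|²` by a multiple of `‖g‖₁²`. Powers of two split into two such sequences.

Both sides of the equivalence therefore reduce to weighted sums of `|f̂(m)|²`. The multiplier of
`Δ_h^α` has modulus `|1 - e^{-imh}|^α`. Up to constants it is at most `min(1, |m| / 2^n)^α` for all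
`|h| ≤ 2^{-n}`, and it is at least that, at every `|m| = 2^j` simultaneously, for the single step
`h = π / (6 · 2^n)`. At `|m| = 2^j` the weights coming from `2^{-αk} (η_{2^k} f)^{(α)}`, `k ≥ n`,
form a geometric series over `k > j`, comparable to `min(1, |m| / 2^n)^{2α}`.
-/

open Complex Finset Function
open AddCircle (haarAddCircle)
open scoped ComplexConjugate

section RieszProduct

lemma sum_sq_norm_le_sq_of_forall_norm_sum_mul_le {ι : Type*} {s : Finset ι} {u : ι → ℂ} {A : ℝ}
    (h : ∀ b : ι → ℂ, ∑ i ∈ s, ‖b i‖ ^ 2 ≤ 1 → ‖∑ i ∈ s, b i * u i‖ ≤ A) :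
    ∑ i ∈ s, ‖u i‖ ^ 2 ≤ A ^ 2 := by
  set S := ∑ i ∈ s, ‖u i‖ ^ 2 with hS
  have hS0 : 0 ≤ S := sum_nonneg fun _ _ => sq_nonneg _
  have hunit : ∑ i ∈ s, ‖conj (u i) / (√S : ℝ)‖ ^ 2 ≤ 1 := by
    simp only [norm_div, RCLike.norm_conj, norm_real, Real.norm_of_nonneg (Real.sqrt_nonneg S),
      div_pow, Real.sq_sqrt hS0, ← sum_div, ← hS, div_self_le_one]
  have hdual : ∑ i ∈ s, conj (u i) / (√S : ℝ) * u i = (√S : ℝ) := by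
    simp only [div_mul_eq_mul_div, conj_mul', ← ofReal_pow, ← ofReal_div, ← ofReal_sum, ← sum_div,
      ← hS, Real.div_sqrt]
  have hA := h _ hunit
  rw [hdual, norm_real, Real.norm_of_nonneg (Real.sqrt_nonneg S)] at hA
  exact (Real.sqrt_le_iff.mp hA).2

variable {T : ℝ}

/-- The Riesz product `∏_{k < K} (1 + i Re(b_k e_{N_k}))`, where `e_N` is the `N`-th Fourier
monomial. -/
noncomputable def rieszProd (N : ℕ → ℤ) (b : ℕ → ℂ) (K : ℕ) : C(AddCircle T, ℂ) :=
  ∏ k ∈ range K, (1 + (I / 2) • (b k • fourier (N k) + conj (b k) • fourier (-N k)))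

lemma rieszProd_apply (N : ℕ → ℤ) (b : ℕ → ℂ) (K : ℕ) (x : AddCircle T) :
    rieszProd N b K x = ∏ k ∈ range K, (1 + I * ((b k * fourier (N k) x).re : ℂ)) := by
  rw [rieszProd, ContinuousMap.prod_apply]
  refine prod_congr rfl fun k _ => ?_
  have hconj : conj (b k) * fourier (-N k) x = conj (b k * fourier (N k) x) := by
    rw [fourier_neg, map_mul]
  simp only [ContinuousMap.add_apply, ContinuousMap.smul_apply, ContinuousMap.one_apply,
    smul_eq_mul, hconj, re_eq_add_conj]
  ring

lemma rieszProd_succ (N : ℕ → ℤ) (b : ℕ → ℂ) (K : ℕ) :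
    (rieszProd N b (K + 1) : C(AddCircle T, ℂ)) = rieszProd N b K +
      (I / 2) • (b K • (fourier (N K) * rieszProd N b K) +
        conj (b K) • (fourier (-N K) * rieszProd N b K)) := by
  rw [rieszProd, prod_range_succ, ← rieszProd, mul_add, mul_one, mul_smul_comm, mul_add,
    mul_smul_comm, mul_smul_comm, mul_comm _ (fourier (N K)), mul_comm _ (fourier (-N K))]

lemma norm_one_add_I_mul_le_exp (t : ℝ) : ‖1 + I * t‖ ≤ Real.exp (t ^ 2 / 2) := by
  refine le_of_sq_le_sq ?_ (Real.exp_pos _).le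
  calc ‖1 + I * t‖ ^ 2 = t ^ 2 + 1 := by
        rw [mul_comm, ← ofReal_one, Complex.sq_norm, normSq_add_mul_I]; ring
    _ ≤ Real.exp (t ^ 2) := Real.add_one_le_exp _
    _ = Real.exp (t ^ 2 / 2) ^ 2 := by rw [← Real.exp_nat_mul]; push_cast; ring_nf

lemma norm_rieszProd_le [Fact (0 < T)] (N : ℕ → ℤ) (b : ℕ → ℂ) (K : ℕ) :
    ‖(rieszProd N b K : C(AddCircle T, ℂ))‖ ≤ Real.exp ((∑ k ∈ range K, ‖b k‖ ^ 2) / 2) := by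
  refine (ContinuousMap.norm_le _ (Real.exp_pos _).le).mpr fun x => ?_
  rw [rieszProd_apply, norm_prod, sum_div, Real.exp_sum]
  refine prod_le_prod (fun _ _ => norm_nonneg _) fun k _ => ?_
  refine (norm_one_add_I_mul_le_exp _).trans (Real.exp_le_exp.mpr ?_)
  have hre : |(b k * fourier (N k) x).re| ≤ ‖b k‖ := by
    refine (abs_re_le_norm _).trans ?_
    rw [norm_mul, fourier_apply, Circle.norm_coe, mul_one]
  have := sq_le_sq' (abs_le.mp hre).1 (abs_le.mp hre).2
  gcongr

/-- The span of the Fourier monomials `e_m` with `0 < |m| < M / 3`. -/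
noncomputable def puncturedFourierSpan (T : ℝ) (M : ℤ) : Submodule ℂ C(AddCircle T, ℂ) :=
  Submodule.span ℂ (fourier '' {m | m ≠ 0 ∧ 3 * |m| < M})

lemma fourier_mem_puncturedFourierSpan {M m : ℤ} (hm : m ≠ 0) (h : 3 * |m| < M) :
    fourier m ∈ puncturedFourierSpan T M :=
  Submodule.subset_span (Set.mem_image_of_mem _ ⟨hm, h⟩)

lemma puncturedFourierSpan_mono : Monotone (puncturedFourierSpan T) := fun _ _ h =>
  Submodule.span_mono (Set.image_mono fun _ hm => ⟨hm.1, hm.2.trans_le h⟩)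

lemma fourier_mul_fourier (j m : ℤ) :
    (fourier j * fourier m : C(AddCircle T, ℂ)) = fourier (j + m) :=
  ContinuousMap.ext fun _ => fourier_add.symm

lemma fourier_mul_mem_puncturedFourierSpan {M j : ℤ} (hj : |j| = M) {p : C(AddCircle T, ℂ)}
    (hp : p ∈ puncturedFourierSpan T M) : fourier j * p ∈ puncturedFourierSpan T (4 * M) := by
  suffices puncturedFourierSpan T M ≤
      (puncturedFourierSpan T (4 * M)).comap (LinearMap.mulLeft ℂ (fourier j)) from this hp
  refine Submodule.span_le.mpr ?_
  rintro _ ⟨m, ⟨hm, hmM⟩, rfl⟩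
  change fourier j * fourier m ∈ puncturedFourierSpan T (4 * M)
  rw [fourier_mul_fourier]
  exact fourier_mem_puncturedFourierSpan (by grind) (by grind)

lemma rieszProd_sub_one_mem_puncturedFourierSpan {N : ℕ → ℤ} (hpos : ∀ k, 0 < N k)
    (hN : ∀ k, 4 * N k ≤ N (k + 1)) (b : ℕ → ℂ) (K : ℕ) :
    rieszProd N b K - 1 ∈ puncturedFourierSpan T (N K) := by
  induction K with
  | zero => simp [rieszProd]
  | succ K ih =>
    have hmul (j : ℤ) (hj : |j| = N K) :
        fourier j * rieszProd N b K ∈ puncturedFourierSpan T (4 * N K) := by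
      rw [← sub_add_cancel (rieszProd N b K) 1, mul_add, mul_one]
      exact add_mem (fourier_mul_mem_puncturedFourierSpan hj ih)
        (fourier_mem_puncturedFourierSpan (by grind) (by grind))
    refine puncturedFourierSpan_mono (hN K) ?_
    rw [rieszProd_succ, add_sub_right_comm]
    refine add_mem (puncturedFourierSpan_mono (by grind) ih) (Submodule.smul_mem _ _ ?_)
    exact add_mem (Submodule.smul_mem _ _ (hmul _ (abs_of_pos (hpos K))))
      (Submodule.smul_mem _ _ (hmul _ (by rw [abs_neg, abs_of_pos (hpos K)])))

lemma map_fourier_mul_eq_zero {L : C(AddCircle T, ℂ) →ₗ[ℂ] ℂ} {M j : ℤ}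
    (hL : ∀ m : ℤ, m ≠ 0 → 3 * |m| < M → L (fourier (j + m)) = 0) {p : C(AddCircle T, ℂ)}
    (hp : p ∈ puncturedFourierSpan T M) : L (fourier j * p) = 0 := by
  suffices puncturedFourierSpan T M ≤
      LinearMap.ker (L ∘ₗ LinearMap.mulLeft ℂ (fourier j)) from this hp
  refine Submodule.span_le.mpr ?_
  rintro _ ⟨m, ⟨hm, hmM⟩, rfl⟩
  change L (fourier j * fourier m) = 0
  rw [fourier_mul_fourier, hL m hm hmM]

lemma map_rieszProd {L : C(AddCircle T, ℂ) →ₗ[ℂ] ℂ} {N : ℕ → ℤ} (hpos : ∀ k, 0 < N k)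
    (hN : ∀ k, 4 * N k ≤ N (k + 1)) (hL₁ : L 1 = 0)
    (hL : ∀ k, ∀ j m : ℤ, |j| = N k → m ≠ 0 → 3 * |m| < N k → L (fourier (j + m)) = 0)
    (b : ℕ → ℂ) (K : ℕ) :
    L (rieszProd N b K) = I / 2 *
      ∑ k ∈ range K, (b k * L (fourier (N k)) + conj (b k) * L (fourier (-N k))) := by
  induction K with
  | zero => simp [rieszProd, hL₁]
  | succ K ih =>
    have hmul (j : ℤ) (hj : |j| = N K) : L (fourier j * rieszProd N b K) = L (fourier j) := by
      rw [← sub_add_cancel (rieszProd N b K) 1, mul_add, mul_one, map_add,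
        map_fourier_mul_eq_zero (fun m => hL K j m hj)
          (rieszProd_sub_one_mem_puncturedFourierSpan hpos hN b K), zero_add]
    rw [rieszProd_succ, map_add, ih, map_smul, map_add, map_smul, map_smul,
      hmul _ (abs_of_pos (hpos K)), hmul _ (by rw [abs_neg, abs_of_pos (hpos K)]),
      sum_range_succ, mul_add]
    rfl

variable [Fact (0 < T)]

lemma norm_sum_mul_map_fourier_add_le {L : C(AddCircle T, ℂ) →L[ℂ] ℂ} {N : ℕ → ℤ}
    (hpos : ∀ k, 0 < N k) (hN : ∀ k, 4 * N k ≤ N (k + 1)) (hL₁ : L 1 = 0)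
    (hL : ∀ k, ∀ j m : ℤ, |j| = N k → m ≠ 0 → 3 * |m| < N k → L (fourier (j + m)) = 0)
    {b : ℕ → ℂ} {K : ℕ} (hb : ∑ k ∈ range K, ‖b k‖ ^ 2 ≤ 1) :
    ‖∑ k ∈ range K, b k * L (fourier (N k)) + ∑ k ∈ range K, conj (b k) * L (fourier (-N k))‖
      ≤ 4 * ‖L‖ := by
  have hexp : Real.exp (1 / 2) ≤ 2 := by
    rw [Real.exp_half, Real.sqrt_le_iff]
    exact ⟨zero_le_two, by linarith [Real.exp_one_lt_d9]⟩
  have hprod : ‖(rieszProd N b K : C(AddCircle T, ℂ))‖ ≤ 2 := by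
    refine ((norm_rieszProd_le N b K).trans (Real.exp_le_exp.mpr ?_)).trans hexp
    gcongr
  have hmap : L (rieszProd N b K) = I / 2 * (∑ k ∈ range K, b k * L (fourier (N k)) +
      ∑ k ∈ range K, conj (b k) * L (fourier (-N k))) := by
    rw [← sum_add_distrib]
    exact map_rieszProd (L := L.toLinearMap) hpos hN hL₁ hL b K
  have hle := (L.le_opNorm _).trans (mul_le_mul_of_nonneg_left hprod (norm_nonneg L))
  rw [hmap, norm_mul, norm_div, norm_I, RCLike.norm_two] at hle
  linarith

-- Replacing `b` by `i b` flips the relative sign of the two sums, so each can be isolated.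
lemma norm_sum_mul_map_fourier_le {L : C(AddCircle T, ℂ) →L[ℂ] ℂ} {N : ℕ → ℤ}
    (hpos : ∀ k, 0 < N k) (hN : ∀ k, 4 * N k ≤ N (k + 1)) (hL₁ : L 1 = 0)
    (hL : ∀ k, ∀ j m : ℤ, |j| = N k → m ≠ 0 → 3 * |m| < N k → L (fourier (j + m)) = 0)
    {b : ℕ → ℂ} {K : ℕ} (hb : ∑ k ∈ range K, ‖b k‖ ^ 2 ≤ 1) :
    ‖∑ k ∈ range K, b k * L (fourier (N k))‖ ≤ 4 * ‖L‖ ∧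
      ‖∑ k ∈ range K, conj (b k) * L (fourier (-N k))‖ ≤ 4 * ‖L‖ := by
  have hadd := norm_sum_mul_map_fourier_add_le hpos hN hL₁ hL hb
  have hIb := norm_sum_mul_map_fourier_add_le (b := fun k => I * b k) (K := K) hpos hN hL₁ hL
    (by simpa only [norm_mul, norm_I, one_mul] using hb)
  simp only [map_mul, conj_I, mul_assoc, ← mul_sum] at hIb
  set X := ∑ k ∈ range K, b k * L (fourier (N k))
  set Y := ∑ k ∈ range K, conj (b k) * L (fourier (-N k))
  have hsub : ‖X - Y‖ ≤ 4 * ‖L‖ := by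
    rwa [neg_mul, ← sub_eq_add_neg, ← mul_sub, norm_mul, norm_I, one_mul] at hIb
  have hX : ‖2 * X‖ ≤ ‖X + Y‖ + ‖X - Y‖ := by
    rw [show 2 * X = X + Y + (X - Y) by ring]
    exact norm_add_le _ _
  have hY : ‖2 * Y‖ ≤ ‖X + Y‖ + ‖X - Y‖ := by
    rw [show 2 * Y = X + Y - (X - Y) by ring]
    exact norm_sub_le _ _
  rw [norm_mul, RCLike.norm_two] at hX hY
  constructor <;> linarith

lemma sum_sq_norm_map_fourier_le {L : C(AddCircle T, ℂ) →L[ℂ] ℂ} {N : ℕ → ℤ}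
    (hpos : ∀ k, 0 < N k) (hN : ∀ k, 4 * N k ≤ N (k + 1)) (hL₁ : L 1 = 0)
    (hL : ∀ k, ∀ j m : ℤ, |j| = N k → m ≠ 0 → 3 * |m| < N k → L (fourier (j + m)) = 0)
    (K : ℕ) :
    ∑ k ∈ range K, (‖L (fourier (N k))‖ ^ 2 + ‖L (fourier (-N k))‖ ^ 2) ≤ 32 * ‖L‖ ^ 2 := by
  have h₁ : ∑ k ∈ range K, ‖L (fourier (N k))‖ ^ 2 ≤ (4 * ‖L‖) ^ 2 :=
    sum_sq_norm_le_sq_of_forall_norm_sum_mul_le fun b hb =>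
      (norm_sum_mul_map_fourier_le hpos hN hL₁ hL hb).1
  have h₂ : ∑ k ∈ range K, ‖L (fourier (-N k))‖ ^ 2 ≤ (4 * ‖L‖) ^ 2 :=
    sum_sq_norm_le_sq_of_forall_norm_sum_mul_le fun b hb => by
      simpa using (norm_sum_mul_map_fourier_le (b := fun k => conj (b k)) hpos hN hL₁ hL
        (by simpa using hb)).2
  rw [sum_add_distrib]
  linarith

end RieszProduct

section FourierUniqueness

section Functional

variable {X : Type*} [TopologicalSpace X] [CompactSpace X] [MeasurableSpace X] {μ : Measure X}
  {g : X → ℂ}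

lemma norm_integral_continuousMap_mul_le (hg : Integrable g μ) (ψ : C(X, ℂ)) :
    ‖∫ x, ψ x * g x ∂μ‖ ≤ (∫ x, ‖g x‖ ∂μ) * ‖ψ‖ := by
  rw [mul_comm, ← integral_const_mul]
  refine norm_integral_le_of_norm_le (hg.norm.const_mul _) (.of_forall fun x => ?_)
  rw [norm_mul]
  gcongr
  exact ψ.norm_coe_le_norm x

variable [OpensMeasurableSpace X]

lemma integrable_continuousMap_mul (hg : Integrable g μ) (ψ : C(X, ℂ)) :
    Integrable (fun x => ψ x * g x) μ :=
  hg.bdd_mul ψ.continuous.aestronglyMeasurable (.of_forall ψ.norm_coe_le_norm)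

/-- The functional `ψ ↦ ∫ ψ g dμ` on continuous functions, for an integrable function `g`. -/
noncomputable def integralMulCLM (hg : Integrable g μ) : C(X, ℂ) →L[ℂ] ℂ :=
  LinearMap.mkContinuous
    { toFun := fun ψ => ∫ x, ψ x * g x ∂μ
      map_add' := fun ψ φ => by
        simp only [ContinuousMap.add_apply, add_mul,
          integral_add (integrable_continuousMap_mul hg ψ) (integrable_continuousMap_mul hg φ)]
      map_smul' := fun c ψ => by
        simp only [ContinuousMap.smul_apply, smul_eq_mul, mul_assoc, integral_const_mul,
          RingHom.id_apply] }
    (∫ x, ‖g x‖ ∂μ) (norm_integral_continuousMap_mul_le hg)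

lemma enorm_integralMulCLM_le (hg : Integrable g μ) : ‖integralMulCLM hg‖ₑ ≤ eLpNorm g 1 μ := by
  rw [eLpNorm_one_eq_lintegral_enorm, ← ofReal_integral_norm_eq_lintegral_enorm hg,
    ← ofReal_norm]
  exact ENNReal.ofReal_le_ofReal (LinearMap.mkContinuous_norm_le _
    (integral_nonneg fun _ => norm_nonneg _) (norm_integral_continuousMap_mul_le hg))

end Functional

lemma ae_eq_zero_of_forall_integral_boundedContinuous_smul_eq_zero
    {X E : Type*} [TopologicalSpace X] [HasOuterApproxClosed X] [MeasurableSpace X] [BorelSpace X]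
    [NormedAddCommGroup E] [NormedSpace ℝ E] [CompleteSpace E] {μ : Measure X} {f : X → E}
    (hf : Integrable f μ)
    (h : ∀ ψ : BoundedContinuousFunction X NNReal, ∫ x, (ψ x : ℝ) • f x ∂μ = 0) :
    f =ᵐ[μ] 0 := by
  refine ae_eq_zero_of_forall_setIntegral_isClosed_eq_zero hf fun s hs => ?_
  have hlim : Filter.Tendsto (fun n => ∫ x, (hs.apprSeq n x : ℝ) • f x ∂μ) Filter.atTop
      (nhds (∫ x, s.indicator f x ∂μ)) := by
    refine tendsto_integral_of_dominated_convergence (fun x => ‖f x‖)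
      (fun n => ?_) hf.norm (fun n => .of_forall fun x => ?_) (.of_forall fun x => ?_)
    · exact ((hs.apprSeq n).continuous.measurable.coe_nnreal_real.aestronglyMeasurable).smul
        hf.aestronglyMeasurable
    · rw [norm_smul, NNReal.norm_eq]
      exact mul_le_of_le_one_left (norm_nonneg _)
        (HasOuterApproxClosed.apprSeq_apply_le_one hs n x)
    · have hx := tendsto_pi_nhds.mp (HasOuterApproxClosed.tendsto_apprSeq hs) x
      have := (NNReal.tendsto_coe.mpr hx).smul_const (f x)
      by_cases hxs : x ∈ s <;> simpa [hxs] using this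
  simp only [h] at hlim
  rw [← integral_indicator hs.measurableSet]
  exact tendsto_nhds_unique hlim tendsto_const_nhds

variable {T : ℝ} [Fact (0 < T)]

lemma integralMulCLM_fourier {g : AddCircle T → ℂ} (hg : Integrable g haarAddCircle) (m : ℤ) :
    integralMulCLM hg (fourier m) = fourierCoeff g (-m) := by
  rw [fourierCoeff, neg_neg]
  rfl

lemma ae_eq_zero_of_fourierCoeff_eq_zero {g : AddCircle T → ℂ} (hg : Integrable g haarAddCircle)
    (h : ∀ m, fourierCoeff g m = 0) : g =ᵐ[haarAddCircle] 0 := by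
  have hker : ⊤ ≤ LinearMap.ker (integralMulCLM hg).toLinearMap := by
    rw [← span_fourier_closure_eq_top]
    refine Submodule.topologicalClosure_minimal _ (Submodule.span_le.mpr ?_)
      (integralMulCLM hg).isClosed_ker
    rintro _ ⟨m, rfl⟩
    exact (integralMulCLM_fourier hg m).trans (h _)
  refine ae_eq_zero_of_forall_integral_boundedContinuous_smul_eq_zero hg fun ψ => ?_
  let φ : C(AddCircle T, ℂ) := ⟨fun x => ((ψ x : ℝ) : ℂ), by fun_prop⟩
  exact hker (Submodule.mem_top (x := φ))

lemma ae_eq_of_fourierCoeff_eq {f g : AddCircle T → ℂ} (hf : Integrable f haarAddCircle)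
    (hg : Integrable g haarAddCircle) (h : fourierCoeff f = fourierCoeff g) :
    f =ᵐ[haarAddCircle] g := by
  have hsub : f - g =ᵐ[haarAddCircle] 0 := by
    refine ae_eq_zero_of_fourierCoeff_eq_zero (hf.sub hg) fun m => ?_
    rw [sub_eq_add_neg, ← neg_one_smul ℂ g, fourierCoeff.add hf (hg.smul _), Pi.add_apply,
      fourierCoeff.const_smul, h, neg_one_smul, add_neg_cancel]
  exact hsub.mono fun _ => sub_eq_zero.mp

/-- The energy `∑_m |ĝ(m)|²` of the Fourier series of `g`. -/
noncomputable def fourierEnergy (g : AddCircle T → ℂ) : ℝ≥0∞ :=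
  ∑' m : ℤ, ‖fourierCoeff g m‖ₑ ^ 2

lemma eLpNorm_two_sq_eq_fourierEnergy (G : Lp ℂ 2 (haarAddCircle (T := T))) :
    eLpNorm G 2 haarAddCircle ^ 2 = fourierEnergy G := by
  have hG := hasSum_sq_fourierCoeff G
  have h_int : Integrable (fun t => ‖G t‖ ^ 2) haarAddCircle :=
    (Lp.memLp G).integrable_norm_pow two_ne_zero
  calc eLpNorm G 2 haarAddCircle ^ 2 = ∫⁻ t, ‖G t‖ₑ ^ 2 ∂haarAddCircle := by
        simpa using eLpNorm_nnreal_pow_eq_lintegral (f := G) (μ := haarAddCircle) two_ne_zero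
    _ = ENNReal.ofReal (∫ t, ‖G t‖ ^ 2 ∂haarAddCircle) := by
        rw [ofReal_integral_eq_lintegral_ofReal h_int (.of_forall fun _ => sq_nonneg _)]
        simp only [ENNReal.ofReal_pow (norm_nonneg _), ofReal_norm]
    _ = fourierEnergy G := by
        rw [← hG.tsum_eq, ENNReal.ofReal_tsum_of_nonneg (fun _ => sq_nonneg _) hG.summable]
        simp only [ENNReal.ofReal_pow (norm_nonneg _), ofReal_norm, fourierEnergy]

lemma exists_Lp_fourierCoeff_eq {c : ℤ → ℂ} (hc : ∑' m, ‖c m‖ₑ ^ 2 ≠ ∞) :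
    ∃ G : Lp ℂ 2 (haarAddCircle (T := T)), fourierCoeff G = c := by
  have hmem : Memℓp c 2 := by
    refine memℓp_gen ?_
    simpa [ENNReal.toReal_pow] using ENNReal.summable_toReal hc
  refine ⟨fourierBasis.repr.symm ⟨c, hmem⟩, funext fun m => ?_⟩
  rw [← fourierBasis_repr, LinearIsometryEquiv.apply_symm_apply]

lemma eLpNorm_one_sq_le_fourierEnergy {g : AddCircle T → ℂ} (hg : Integrable g haarAddCircle) :
    eLpNorm g 1 haarAddCircle ^ 2 ≤ fourierEnergy g := by
  by_cases hE : fourierEnergy g = ∞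
  · exact hE ▸ le_top
  obtain ⟨G, hG⟩ := exists_Lp_fourierCoeff_eq (T := T) hE
  have hgG : g =ᵐ[haarAddCircle] G :=
    ae_eq_of_fourierCoeff_eq hg ((Lp.memLp G).integrable one_le_two) hG.symm
  calc eLpNorm g 1 haarAddCircle ^ 2 ≤ eLpNorm g 2 haarAddCircle ^ 2 := by
        gcongr
        exact eLpNorm_le_eLpNorm_of_exponent_le one_le_two hg.aestronglyMeasurable
    _ = fourierEnergy G := by rw [eLpNorm_congr_ae hgG, eLpNorm_two_sq_eq_fourierEnergy]
    _ = fourierEnergy g := by simp only [fourierEnergy, hG]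

end FourierUniqueness

section Lacunary

lemma tsum_int_eq_tsum_two_pow {F : ℤ → ℝ≥0∞}
    (hF : ∀ m : ℤ, (∀ j : ℕ, m.natAbs ≠ 2 ^ j) → F m = 0) :
    ∑' m, F m = ∑' j : ℕ, (F (2 ^ j) + F (-2 ^ j)) := by
  let e : ℕ ⊕ ℕ → ℤ := Sum.elim (fun j => 2 ^ j) fun j => -2 ^ j
  have he : Injective e := by
    have hinj : Injective fun j : ℕ => (2 : ℤ) ^ j := pow_right_injective₀ two_pos (by decide)
    refine hinj.sumElim (neg_injective.comp hinj) fun i j => ?_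
    have hi : (0 : ℤ) < 2 ^ i := by positivity
    have hj : (0 : ℤ) < 2 ^ j := by positivity
    change (2 : ℤ) ^ i ≠ -2 ^ j
    omega
  have hsupp : support F ⊆ Set.range e := fun m hm => by
    obtain ⟨j, hj⟩ : ∃ j : ℕ, m.natAbs = 2 ^ j := by
      by_contra! h
      exact hm (hF m h)
    rcases Int.natAbs_eq m with h | h <;> rw [hj, Nat.cast_pow, Nat.cast_ofNat] at h
    · exact ⟨Sum.inl j, h.symm⟩
    · exact ⟨Sum.inr j, h.symm⟩
  rw [← he.tsum_eq hsupp, ENNReal.tsum_add]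
  exact Summable.tsum_sum (f := F ∘ e) ENNReal.summable ENNReal.summable

lemma natAbs_add_ne_two_pow {s : ℕ} {j m : ℤ} (hj : |j| = 2 ^ s) (h0 : m ≠ 0)
    (hm : 3 * |m| < 2 ^ s) (i : ℕ) : (j + m).natAbs ≠ 2 ^ i := by
  intro h
  have h' : |j + m| = 2 ^ i := by
    rw [Int.abs_eq_natAbs, h]
    push_cast
    rfl
  rcases lt_trichotomy i s with hi | rfl | hi
  · have : (2 : ℤ) ^ (i + 1) ≤ 2 ^ s := pow_le_pow_right₀ (by norm_num) hi
    rw [pow_succ] at this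
    grind
  · grind
  · have : (2 : ℤ) ^ (s + 1) ≤ 2 ^ i := pow_le_pow_right₀ (by norm_num) hi
    rw [pow_succ] at this
    grind

variable {T : ℝ} [Fact (0 < T)]

/-- A function on the circle whose Fourier series is lacunary: only frequencies `±2 ^ j` occur. -/
def IsLacunary (g : AddCircle T → ℂ) : Prop :=
  ∀ m : ℤ, (∀ j : ℕ, m.natAbs ≠ 2 ^ j) → fourierCoeff g m = 0

lemma IsLacunary.fourierEnergy_eq {g : AddCircle T → ℂ} (hl : IsLacunary g) :
    fourierEnergy g =
      ∑' j : ℕ, (‖fourierCoeff g (2 ^ j)‖ₑ ^ 2 + ‖fourierCoeff g (-2 ^ j)‖ₑ ^ 2) :=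
  tsum_int_eq_tsum_two_pow fun m hm => by rw [hl m hm, enorm_zero, zero_pow two_ne_zero]

lemma IsLacunary.sum_sq_fourierCoeff_le {g : AddCircle T → ℂ} (hl : IsLacunary g)
    (hg : Integrable g haarAddCircle) (r K : ℕ) :
    ∑ k ∈ range K, (‖fourierCoeff g (2 ^ (2 * k + r))‖ₑ ^ 2 +
      ‖fourierCoeff g (-2 ^ (2 * k + r))‖ₑ ^ 2) ≤ 32 * eLpNorm g 1 haarAddCircle ^ 2 := by
  have hzero (m : ℤ) (hm : ∀ j : ℕ, m.natAbs ≠ 2 ^ j) : integralMulCLM hg (fourier m) = 0 := by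
    rw [integralMulCLM_fourier]
    exact hl _ fun j => by simpa only [Int.natAbs_neg] using hm j
  have hone : integralMulCLM hg 1 = 0 := by
    rw [← hzero 0 fun j => (pow_ne_zero j two_ne_zero).symm]
    exact congrArg _ (ContinuousMap.ext fun _ => fourier_zero.symm)
  have hriesz := sum_sq_norm_map_fourier_le (L := integralMulCLM hg)
    (N := fun k => 2 ^ (2 * k + r)) (fun k => by positivity)
    (fun k => (by ring : (4 : ℤ) * 2 ^ (2 * k + r) = 2 ^ (2 * (k + 1) + r)).le)
    hone (fun k j m hj h0 hm => hzero _ (natAbs_add_ne_two_pow hj h0 hm)) K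
  simp only [integralMulCLM_fourier, neg_neg] at hriesz
  calc _ ≤ 32 * ‖integralMulCLM hg‖ₑ ^ 2 := by
        simp only [enorm_eq_nnnorm]
        norm_cast
        rw [← NNReal.coe_le_coe]
        push_cast
        simpa only [add_comm] using hriesz
    _ ≤ 32 * eLpNorm g 1 haarAddCircle ^ 2 := by
        gcongr
        exact enorm_integralMulCLM_le hg

theorem IsLacunary.fourierEnergy_le {g : AddCircle T → ℂ} (hl : IsLacunary g)
    (hg : Integrable g haarAddCircle) :
    fourierEnergy g ≤ 64 * eLpNorm g 1 haarAddCircle ^ 2 := by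
  have hle (r : ℕ) := ENNReal.tsum_le_of_sum_range_le (hl.sum_sq_fourierCoeff_le hg r)
  rw [hl.fourierEnergy_eq, ← tsum_even_add_odd ENNReal.summable ENNReal.summable]
  calc _ ≤ _ := add_le_add (hle 0) (hle 1)
    _ = 64 * eLpNorm g 1 haarAddCircle ^ 2 := by ring

end Lacunary

section BinomialSeries

lemma gBinom_eq_choose (α : ℝ) (n : ℕ) : gBinom α n = Ring.choose α n := by
  induction n with
  | zero => rw [gBinom, Ring.choose_zero_right]
  | succ n ih =>
    have hpoch := Ring.descPochhammer_eq_factorial_smul_choose α (n + 1)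
    rw [descPochhammer_succ_right, Polynomial.smeval_mul,
      Ring.descPochhammer_eq_factorial_smul_choose] at hpoch
    simp only [Polynomial.smeval_sub, Polynomial.smeval_X, Polynomial.smeval_natCast, pow_one,
      pow_zero, nsmul_eq_mul, mul_one, Nat.factorial_succ, Nat.cast_mul, Nat.cast_succ] at hpoch
    have hfact : (n.factorial : ℝ) ≠ 0 := by exact_mod_cast n.factorial_ne_zero
    rw [gBinom, ih, div_eq_iff (by positivity)]
    refine mul_left_cancel₀ hfact ?_
    linarith

lemma mul_abs_gBinom_eq_sub {α : ℝ} {ν : ℕ} (hν : α ≤ ν) :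
    α * |gBinom α ν| = ν * |gBinom α ν| - (ν + 1 : ℕ) * |gBinom α (ν + 1)| := by
  have hpos : (0 : ℝ) < ν + 1 := by positivity
  rw [gBinom, abs_div, abs_mul, abs_of_pos hpos, abs_of_nonpos (sub_nonpos.mpr hν)]
  push_cast
  field_simp
  ring

lemma summable_abs_gBinom {α : ℝ} (hα : 0 < α) : Summable fun ν => |gBinom α ν| := by
  obtain ⟨M, hM⟩ := exists_nat_ge α
  rw [← summable_nat_add_iff M]
  refine summable_of_sum_range_le (c := M * |gBinom α M| / α) (fun _ => abs_nonneg _) fun K => ?_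
  have htelescope : α * ∑ i ∈ range K, |gBinom α (i + M)| =
      M * |gBinom α M| - (K + M : ℕ) * |gBinom α (K + M)| := by
    induction K with
    | zero => simp only [range_zero, sum_empty, mul_zero, zero_add, sub_self]
    | succ K ih =>
      rw [sum_range_succ, mul_add, ih, mul_abs_gBinom_eq_sub (by push_cast; linarith),
        Nat.add_right_comm K 1 M]
      ring
  rw [le_div_iff₀ hα, mul_comm, htelescope]
  exact sub_le_self _ (by positivity)

lemma hasSum_gBinom (α : ℝ) {w : ℂ} (hw : ‖w‖ < 1) :
    HasSum (fun ν => (((-1) ^ ν * gBinom α ν : ℝ) : ℂ) * w ^ ν) ((1 - w) ^ (α : ℂ)) := by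
  have hmem : -w ∈ Metric.eball (0 : ℂ) 1 := by
    rw [Metric.mem_eball, edist_zero_right, enorm_neg, ← ofReal_norm]
    exact ENNReal.ofReal_lt_one.mpr hw
  have hbinom := (one_add_cpow_hasFPowerSeriesOnBall_zero (a := (α : ℂ))).hasSum hmem
  have hterm (ν : ℕ) : binomialSeries ℂ (α : ℂ) ν (fun _ => -w) =
      (((-1) ^ ν * gBinom α ν : ℝ) : ℂ) * w ^ ν := by
    rw [gBinom_eq_choose, binomialSeries_apply, ← ofReal_choose, List.ofFn_const,
      List.prod_replicate, neg_pow w, smul_eq_mul]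
    push_cast
    ring
  rw [zero_add, ← sub_eq_add_neg] at hbinom
  simpa only [hterm] using hbinom

lemma norm_tsum_gBinom {α : ℝ} (hα : 0 < α) {z : ℂ} (hz : ‖z‖ = 1) :
    ‖∑' ν, (((-1) ^ ν * gBinom α ν : ℝ) : ℂ) * z ^ ν‖ = ‖1 - z‖ ^ α := by
  have hseries : ContinuousOn (fun w : ℂ => ∑' ν, (((-1) ^ ν * gBinom α ν : ℝ) : ℂ) * w ^ ν)
      (Metric.closedBall 0 1) := by
    refine continuousOn_tsum (fun ν => by fun_prop) (summable_abs_gBinom hα) fun ν w hw => ?_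
    rw [mem_closedBall_zero_iff] at hw
    rw [norm_mul, norm_real, norm_mul, norm_pow, norm_neg, norm_one, one_pow, one_mul,
      norm_pow, Real.norm_eq_abs]
    exact mul_le_of_le_one_right (abs_nonneg _) (pow_le_one₀ (norm_nonneg _) hw)
  have hpower : ContinuousOn (fun w : ℂ => ‖1 - w‖ ^ α) (Metric.closedBall 0 1) :=
    (continuous_const.sub continuous_id).norm.continuousOn.rpow_const fun _ _ => Or.inr hα.le
  have heq : Set.EqOn (fun w : ℂ => ‖∑' ν, (((-1) ^ ν * gBinom α ν : ℝ) : ℂ) * w ^ ν‖)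
      (fun w : ℂ => ‖1 - w‖ ^ α) (Metric.ball 0 1) := fun w hw => by
    rw [mem_ball_zero_iff] at hw
    simp only [(hasSum_gBinom α hw).tsum_eq, norm_cpow_real]
  refine heq.of_subset_closure hseries.norm hpower Metric.ball_subset_closedBall
    (closure_ball _ one_ne_zero).ge ?_
  exact mem_closedBall_zero_iff.mpr hz.le

end BinomialSeries

section Translates

lemma integrable_tsum_of_summable_integral_norm {X E ι : Type*} [MeasurableSpace X]
    {μ : Measure X} [NormedAddCommGroup E] [CompleteSpace E] [Countable ι] {F : ι → X → E}
    (hF : ∀ i, Integrable (F i) μ) (hs : Summable fun i => ∫ x, ‖F i x‖ ∂μ) :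
    Integrable (fun x => ∑' i, F i x) μ := by
  have hfin : ∑' i, ‖(hF i).toL1 (F i)‖ₑ ≠ ∞ := by
    refine tsum_enorm_ne_top_iff_summable_norm.mpr (hs.congr fun i => ?_)
    rw [L1.norm_of_fun_eq_integral_norm]
  have hcoe : ∀ᵐ x ∂μ, ∀ i, (hF i).toL1 (F i) x = F i x :=
    ae_all_iff.mpr fun i => (hF i).coeFn_toL1
  refine (L1.integrable_coeFn (∑' i, (hF i).toL1 (F i))).congr ?_
  filter_upwards [Lp.coeFn_tsum hfin, hcoe] with x hsum hx
  rw [hsum]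
  exact tsum_congr hx

variable {T : ℝ}

lemma norm_fourier_apply (m : ℤ) (x : AddCircle T) : ‖fourier m x‖ = 1 :=
  Circle.norm_coe _

variable [Fact (0 < T)] {ι : Type*} {F : AddCircle T → ℂ}

lemma fourierCoeff_comp_add_right (F : AddCircle T → ℂ) (a : AddCircle T) (m : ℤ) :
    fourierCoeff (fun x => F (x + a)) m = fourier m a * fourierCoeff F m := by
  have hshift (x : AddCircle T) : fourier (-m) x = fourier m a * fourier (-m) (x + a) := by
    have hx : -m • x = m • a + -m • (x + a) := by
      rw [smul_add, neg_smul m a]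
      abel
    rw [fourier_apply, hx, AddCircle.toCircle_add, Circle.coe_mul, fourier_apply, fourier_apply]
  calc fourierCoeff (fun x => F (x + a)) m
      = ∫ x, fourier m a * (fourier (-m) (x + a) * F (x + a)) ∂haarAddCircle :=
        integral_congr_ae (.of_forall fun x => by
          simp only [hshift x, smul_eq_mul, mul_assoc])
    _ = fourier m a * fourierCoeff F m := by
        rw [integral_const_mul, integral_add_right_eq_self fun x => fourier (-m) x * F x]
        rfl

lemma integral_norm_smul_comp_add_right (c : ℂ) (F : AddCircle T → ℂ) (a : AddCircle T) :
    ∫ x, ‖c • F (x + a)‖ ∂haarAddCircle = ‖c‖ * ∫ x, ‖F x‖ ∂haarAddCircle := by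
  simp only [norm_smul]
  rw [integral_const_mul, integral_add_right_eq_self fun x => ‖F x‖]

variable [Countable ι] {c : ι → ℂ}

lemma integrable_tsum_smul_comp_add_right (hF : Integrable F haarAddCircle)
    (hc : Summable fun i => ‖c i‖) (a : ι → AddCircle T) :
    Integrable (fun x => ∑' i, c i • F (x + a i)) haarAddCircle := by
  refine integrable_tsum_of_summable_integral_norm
    (fun i => (hF.comp_add_right (a i)).smul (c i)) ?_
  simp only [integral_norm_smul_comp_add_right]
  exact hc.mul_right _

lemma fourierCoeff_tsum_smul_comp_add_right (hF : Integrable F haarAddCircle)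
    (hc : Summable fun i => ‖c i‖) (a : ι → AddCircle T) (m : ℤ) :
    fourierCoeff (fun x => ∑' i, c i • F (x + a i)) m =
      (∑' i, c i * fourier m (a i)) * fourierCoeff F m := by
  have h_int (i : ι) :
      Integrable (fun x => fourier (-m) x • c i • F (x + a i)) haarAddCircle :=
    integrable_continuousMap_mul ((hF.comp_add_right (a i)).smul (c i)) (fourier (-m))
  have hsum : Summable fun i =>
      ∫ x, ‖fourier (-m) x • c i • F (x + a i)‖ ∂(haarAddCircle (T := T)) := by
    simp only [norm_smul (fourier (-m) _), norm_fourier_apply, one_mul,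
      integral_norm_smul_comp_add_right]
    exact hc.mul_right _
  have hterm (i : ι) : ∫ x, fourier (-m) x • c i • F (x + a i) ∂haarAddCircle =
      c i * fourier m (a i) * fourierCoeff F m := by
    rw [mul_assoc, ← fourierCoeff_comp_add_right, ← smul_eq_mul, ← fourierCoeff.const_smul]
    rfl
  simp only [← tsum_mul_right, ← hterm]
  rw [integral_tsum_of_summable_integral_norm h_int hsum, fourierCoeff]
  refine integral_congr_ae (.of_forall fun x => ?_)
  simp only [smul_eq_mul, tsum_mul_left]

end Translates

section FractionalDifference

variable {T : ℝ} {α : ℝ} {F : AddCircle T → ℂ}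

/-- The fractional difference `Δ_h^α` of a function on the circle. -/
noncomputable def circleFracDiff (α h : ℝ) (F : AddCircle T → ℂ) : AddCircle T → ℂ :=
  fun x => ∑' ν : ℕ, (((-1) ^ ν * gBinom α ν : ℝ) : ℂ) • F (x + ((α - ν) * h : ℝ))

lemma summable_norm_neg_one_pow_mul_gBinom (hα : 0 < α) :
    Summable fun ν => ‖(((-1) ^ ν * gBinom α ν : ℝ) : ℂ)‖ := by
  simpa only [norm_real, norm_mul, norm_pow, norm_neg, norm_one, one_pow, one_mul,
    Real.norm_eq_abs] using summable_abs_gBinom hα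

variable [Fact (0 < T)]

lemma integrable_circleFracDiff (hα : 0 < α) (hF : Integrable F haarAddCircle) (h : ℝ) :
    Integrable (circleFracDiff α h F) haarAddCircle :=
  integrable_tsum_smul_comp_add_right hF (summable_norm_neg_one_pow_mul_gBinom hα) _

lemma norm_fourierCoeff_circleFracDiff (hα : 0 < α) (hF : Integrable F haarAddCircle)
    (h : ℝ) (m : ℤ) :
    ‖fourierCoeff (circleFracDiff α h F) m‖ =
      ‖1 - fourier (-m) (h : AddCircle T)‖ ^ α * ‖fourierCoeff F m‖ := by
  have hshift (ν : ℕ) : fourier m (((α - ν) * h : ℝ) : AddCircle T) =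
      fourier m ((α * h : ℝ) : AddCircle T) * fourier (-m) (h : AddCircle T) ^ ν := by
    simp only [fourier_coe_apply, ← Complex.exp_nat_mul, ← Complex.exp_add]
    push_cast
    ring_nf
  have hcoeff := fourierCoeff_tsum_smul_comp_add_right hF
    (summable_norm_neg_one_pow_mul_gBinom hα) (fun ν => (((α - ν) * h : ℝ) : AddCircle T)) m
  simp only [hshift, mul_left_comm _ (fourier m _)] at hcoeff
  unfold circleFracDiff
  rw [hcoeff, tsum_mul_left, norm_mul, norm_mul, norm_fourier_apply, one_mul,
    norm_tsum_gBinom hα (norm_fourier_apply _ _)]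

end FractionalDifference

section Multiplier

lemma norm_one_sub_fourier {T : ℝ} (m : ℤ) (h : ℝ) :
    ‖1 - fourier m (h : AddCircle T)‖ = 2 * |Real.sin (Real.pi * m * h / T)| := by
  have hexp := norm_exp_I_mul_ofReal_sub_one (2 * (Real.pi * m * h / T))
  rw [mul_div_cancel_left₀ _ two_ne_zero, norm_mul, Real.norm_two, Real.norm_eq_abs] at hexp
  rw [norm_sub_rev, fourier_coe_apply, ← hexp]
  push_cast
  ring_nf

lemma norm_one_sub_fourier_two_pi {m : ℤ} {j : ℕ} (hm : m.natAbs = 2 ^ j) (h : ℝ) :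
    ‖1 - fourier m (h : AddCircle (2 * Real.pi))‖ = 2 * |Real.sin (2 ^ j * h / 2)| := by
  have harg : Real.pi * m * h / (2 * Real.pi) = m * h / 2 := by
    field_simp
  rw [norm_one_sub_fourier, harg]
  rcases Int.natAbs_eq m with hsign | hsign <;> rw [hsign, hm] <;> push_cast
  · rfl
  · rw [neg_mul, neg_div, Real.sin_neg, abs_neg]

lemma half_pow_sub {n j : ℕ} (hjn : j ≤ n) : (1 / 2 : ℝ) ^ (n - j) = 2 ^ j / 2 ^ n := by
  rw [one_div, inv_pow, eq_div_iff (by positivity), inv_mul_eq_iff_eq_mul₀ (by positivity),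
    ← pow_add, Nat.sub_add_cancel hjn]

lemma norm_one_sub_fourier_le {n j : ℕ} {m : ℤ} {h : ℝ} (hh : |h| ≤ 1 / 2 ^ n)
    (hm : m.natAbs = 2 ^ j) :
    ‖1 - fourier m (h : AddCircle (2 * Real.pi))‖ ≤ 2 * (1 / 2) ^ (n - j) := by
  rw [norm_one_sub_fourier_two_pi hm]
  gcongr
  rcases le_total n j with hnj | hjn
  · rw [Nat.sub_eq_zero_of_le hnj, pow_zero]
    exact Real.abs_sin_le_one _
  calc |Real.sin (2 ^ j * h / 2)| ≤ |2 ^ j * h / 2| := Real.abs_sin_le_abs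
    _ ≤ |2 ^ j * h| := by
      rw [abs_div, abs_two]
      exact half_le_self (abs_nonneg _)
    _ = 2 ^ j * |h| := by rw [abs_mul, abs_of_pos (by positivity)]
    _ ≤ 2 ^ j * (1 / 2 ^ n) := by gcongr
    _ = (1 / 2) ^ (n - j) := by rw [half_pow_sub hjn, mul_one_div]

lemma cos_two_pow_mul_two_pi_div_three (i : ℕ) :
    Real.cos (2 ^ i * (2 * Real.pi / 3)) = -1 / 2 := by
  induction i with
  | zero =>
    rw [pow_zero, one_mul, mul_div_assoc, Real.cos_two_mul, Real.cos_pi_div_three]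
    norm_num
  | succ i ih =>
    rw [pow_succ', mul_assoc, Real.cos_two_mul, ih]
    norm_num

lemma half_le_abs_sin_two_pow_mul_pi_div_three (i : ℕ) :
    1 / 2 ≤ |Real.sin (2 ^ i * (2 * Real.pi / 3) / 2)| := by
  have hsq : Real.sin (2 ^ i * (2 * Real.pi / 3) / 2) ^ 2 = 3 / 4 := by
    rw [Real.sin_sq_eq_half_sub, mul_div_cancel₀ _ two_ne_zero, cos_two_pow_mul_two_pi_div_three]
    norm_num
  rw [← abs_of_pos (one_half_pos (α := ℝ)), ← sq_le_sq, hsq]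
  norm_num

lemma le_abs_sin_mul_pi_div_twelve {t : ℝ} (ht : 0 ≤ t) (ht' : t ≤ 6) :
    t / 6 ≤ |Real.sin (t * (Real.pi / 12))| := by
  have hjordan := Real.mul_le_sin (x := t * (Real.pi / 12)) (by positivity)
    (by nlinarith [Real.pi_pos])
  refine le_trans (le_of_eq ?_) (hjordan.trans (le_abs_self _))
  field_simp
  ring

lemma le_norm_one_sub_fourier {n j : ℕ} {m : ℤ} (hm : m.natAbs = 2 ^ j) :
    (1 / 3) * (1 / 2) ^ (n - j) ≤
      ‖1 - fourier m ((Real.pi / 6 / 2 ^ n : ℝ) : AddCircle (2 * Real.pi))‖ := by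
  -- For small `j` Jordan's inequality applies; for large `j` the angle `2 ^ j h` is
  -- `2 ^ i (2π / 3)` at this step `h`, and doubling keeps its cosine equal to `-1/2`.
  rw [norm_one_sub_fourier_two_pi hm]
  have hn : (0 : ℝ) < 2 ^ n := by positivity
  rcases le_or_gt j (n + 1) with hj | hj
  · have hle : (1 / 2 : ℝ) ^ (n - j) ≤ 2 ^ j / 2 ^ n := by
      rcases le_total n j with hnj | hjn
      · rw [Nat.sub_eq_zero_of_le hnj, pow_zero, one_le_div hn]
        exact pow_le_pow_right₀ one_le_two hnj
      · exact (half_pow_sub hjn).le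
    have hle' : (2 : ℝ) ^ j / 2 ^ n ≤ 6 := by
      have hpow : (2 : ℝ) ^ j ≤ 2 ^ (n + 1) := pow_le_pow_right₀ one_le_two hj
      rw [div_le_iff₀ hn]
      linarith [pow_succ (2 : ℝ) n]
    have harg : (2 : ℝ) ^ j * (Real.pi / 6 / 2 ^ n) / 2 = 2 ^ j / 2 ^ n * (Real.pi / 12) := by
      ring
    rw [harg]
    linarith [le_abs_sin_mul_pi_div_twelve (by positivity) hle']
  · obtain ⟨i, rfl⟩ := Nat.exists_eq_add_of_le (show n + 2 ≤ j by omega)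
    have harg : (2 : ℝ) ^ (n + 2 + i) * (Real.pi / 6 / 2 ^ n) = 2 ^ i * (2 * Real.pi / 3) := by
      rw [pow_add, pow_add]
      field_simp
      norm_num
    rw [harg, Nat.sub_eq_zero_of_le (by omega), pow_zero]
    linarith [half_le_abs_sin_two_pow_mul_pi_div_three i]

end Multiplier

section SmoothnessEnergy

variable {T : ℝ} {α : ℝ}

/-- The weight `2 ^ (-α (n - log₂ |m|)₊)`, which is `min (1, |m| / 2 ^ n) ^ α` at the
frequencies `m = ± 2 ^ j`. -/
noncomputable def dyadicWeight (α : ℝ) (n : ℕ) (m : ℤ) : ℝ≥0∞ :=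
  ((2 : ℝ≥0∞) ^ (-α)) ^ (n - Nat.log 2 m.natAbs)

lemma dyadicWeight_of_natAbs_eq (α : ℝ) (n : ℕ) {m : ℤ} {j : ℕ} (hm : m.natAbs = 2 ^ j) :
    dyadicWeight α n m = ((2 : ℝ≥0∞) ^ (-α)) ^ (n - j) := by
  rw [dyadicWeight, hm, Nat.log_pow one_lt_two]

lemma ofReal_mul_half_pow_rpow {c : ℝ} (hc : 0 ≤ c) (α : ℝ) (i : ℕ) :
    ENNReal.ofReal ((c * (1 / 2) ^ i) ^ α) =
      ENNReal.ofReal (c ^ α) * ((2 : ℝ≥0∞) ^ (-α)) ^ i := by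
  rw [Real.mul_rpow hc (by positivity), ENNReal.ofReal_mul (by positivity)]
  congr 1
  rw [← Real.rpow_pow_comm (by positivity), ENNReal.ofReal_pow (by positivity), one_div,
    Real.inv_rpow zero_le_two, ← Real.rpow_neg zero_le_two,
    ← ENNReal.ofReal_rpow_of_pos two_pos, ENNReal.ofReal_ofNat]

variable [Fact (0 < T)] {F G : AddCircle T → ℂ}

/-- The Fourier side of the modulus of smoothness of order `α` at scale `2 ^ (-n)`: the energy
of a function on the circle in which frequency `m` is damped by `dyadicWeight α n m`. -/
noncomputable def smoothnessEnergy (α : ℝ) (n : ℕ) (F : AddCircle T → ℂ) : ℝ≥0∞ :=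
  ∑' m : ℤ, dyadicWeight α n m ^ 2 * ‖fourierCoeff F m‖ₑ ^ 2

lemma IsLacunary.tsum_mul_le_tsum_mul (hl : IsLacunary F) {u v : ℤ → ℝ≥0∞}
    (huv : ∀ (j : ℕ) (m : ℤ), m.natAbs = 2 ^ j → u m ≤ v m) :
    ∑' m : ℤ, u m * ‖fourierCoeff F m‖ₑ ^ 2 ≤ ∑' m : ℤ, v m * ‖fourierCoeff F m‖ₑ ^ 2 := by
  refine ENNReal.tsum_le_tsum fun m => ?_
  by_cases hm : ∃ j : ℕ, m.natAbs = 2 ^ j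
  · obtain ⟨j, hj⟩ := hm
    gcongr
    exact huv j m hj
  · rw [hl m (not_exists.mp hm), enorm_zero, zero_pow two_ne_zero, mul_zero, mul_zero]

lemma IsLacunary.of_fourierCoeff_eq_zero (hl : IsLacunary F)
    (h : ∀ m, fourierCoeff F m = 0 → fourierCoeff G m = 0) : IsLacunary G :=
  fun m hm => h m (hl m hm)

lemma fourierEnergy_eq_tsum_of_enorm_fourierCoeff_eq {w : ℤ → ℝ≥0∞}
    (h : ∀ m, ‖fourierCoeff G m‖ₑ = w m * ‖fourierCoeff F m‖ₑ) :
    fourierEnergy G = ∑' m : ℤ, w m ^ 2 * ‖fourierCoeff F m‖ₑ ^ 2 := by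
  simp only [fourierEnergy, h, mul_pow]

end SmoothnessEnergy

section FractionalDifferenceEnergy

variable {T α : ℝ} [Fact (0 < T)] {F : AddCircle T → ℂ}

lemma IsLacunary.fracDiff (hl : IsLacunary F) (hα : 0 < α)
    (hF : Integrable F haarAddCircle) (h : ℝ) : IsLacunary (circleFracDiff α h F) :=
  hl.of_fourierCoeff_eq_zero fun m hm => by
    rw [← norm_eq_zero, norm_fourierCoeff_circleFracDiff hα hF, hm, norm_zero, mul_zero]

lemma fourierEnergy_circleFracDiff (hα : 0 < α) (hF : Integrable F haarAddCircle) (h : ℝ) :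
    fourierEnergy (circleFracDiff α h F) =
      ∑' m : ℤ, ENNReal.ofReal (‖1 - fourier (-m) (h : AddCircle T)‖ ^ α) ^ 2 *
        ‖fourierCoeff F m‖ₑ ^ 2 :=
  fourierEnergy_eq_tsum_of_enorm_fourierCoeff_eq fun m => by
    rw [← ofReal_norm, norm_fourierCoeff_circleFracDiff hα hF, ENNReal.ofReal_mul (by positivity),
      ofReal_norm]

end FractionalDifferenceEnergy

section FractionalDifferenceBounds

variable {α : ℝ} [Fact (0 < 2 * Real.pi)] {F : AddCircle (2 * Real.pi) → ℂ}

lemma fourierEnergy_circleFracDiff_le (hα : 0 < α) (hF : Integrable F haarAddCircle)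
    (hl : IsLacunary F) {n : ℕ} {h : ℝ} (hh : |h| ≤ 1 / 2 ^ n) :
    fourierEnergy (circleFracDiff α h F) ≤
      ENNReal.ofReal (2 ^ α) ^ 2 * smoothnessEnergy α n F := by
  rw [fourierEnergy_circleFracDiff hα hF, smoothnessEnergy, ← ENNReal.tsum_mul_left]
  simp only [← mul_assoc]
  refine hl.tsum_mul_le_tsum_mul fun j m hm => ?_
  rw [dyadicWeight_of_natAbs_eq α n hm, ← mul_pow, ← ofReal_mul_half_pow_rpow zero_le_two]
  gcongr
  exact norm_one_sub_fourier_le hh (by rwa [Int.natAbs_neg])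

lemma smoothnessEnergy_le_fourierEnergy_circleFracDiff (hα : 0 < α)
    (hF : Integrable F haarAddCircle) (hl : IsLacunary F) (n : ℕ) :
    ENNReal.ofReal ((1 / 3) ^ α) ^ 2 * smoothnessEnergy α n F ≤
      fourierEnergy (circleFracDiff α (Real.pi / 6 / 2 ^ n) F) := by
  rw [fourierEnergy_circleFracDiff hα hF, smoothnessEnergy, ← ENNReal.tsum_mul_left]
  simp only [← mul_assoc]
  refine hl.tsum_mul_le_tsum_mul fun j m hm => ?_
  rw [dyadicWeight_of_natAbs_eq α n hm, ← mul_pow, ← ofReal_mul_half_pow_rpow (by norm_num)]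
  gcongr
  exact le_norm_one_sub_fourier (by rwa [Int.natAbs_neg])

end FractionalDifferenceBounds

section VallePoussin

variable {T : ℝ} {η : ℝ → ℝ}

/-- The Fourier multiplier `(im)^α η(|m|/N)` of the Weyl derivative of order `α` of the de la
Vallée Poussin mean `η_N`; it vanishes at `m = 0`. -/
noncomputable def vdpWeylMultiplier (η : ℝ → ℝ) (α : ℝ) (N : ℕ) (m : ℤ) : ℂ :=
  (if m = 0 then 0 else (I * (m : ℂ)) ^ (α : ℂ)) * ((η (|(m : ℝ)| / N) : ℝ) : ℂ)

lemma vdpWeylMultiplier_eq_zero (hη : ∀ ξ : ℝ, 1 ≤ ξ → η ξ = 0) (α : ℝ) {N : ℕ} (hN : 0 < N)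
    {m : ℤ} (hm : m ∉ Ioo (-(N : ℤ)) N) : vdpWeylMultiplier η α N m = 0 := by
  rw [mem_Ioo, ← abs_lt, not_lt] at hm
  have hle : 1 ≤ |(m : ℝ)| / N := by
    rw [one_le_div (by exact_mod_cast hN)]
    exact_mod_cast hm
  rw [vdpWeylMultiplier, hη _ hle, ofReal_zero, mul_zero]

lemma enorm_vdpWeylMultiplier (hη_one : ∀ ξ : ℝ, ξ ≤ 1 / 2 → η ξ = 1)
    (hη_zero : ∀ ξ : ℝ, 1 ≤ ξ → η ξ = 0) (α : ℝ) (K : ℕ) {j : ℕ} {m : ℤ}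
    (hm : m.natAbs = 2 ^ j) :
    ‖vdpWeylMultiplier η α (2 ^ K) m‖ₑ = if j < K then ((2 : ℝ≥0∞) ^ α) ^ j else 0 := by
  have habs : |(m : ℝ)| = 2 ^ j := by
    rw [← Int.cast_abs, Int.abs_eq_natAbs, hm]
    norm_cast
  have hm0 : m ≠ 0 := Int.natAbs_ne_zero.mp (hm ▸ pow_ne_zero j two_ne_zero)
  rw [vdpWeylMultiplier, if_neg hm0, habs]
  push_cast
  split_ifs with hj
  · have hle : (2 : ℝ) ^ j / 2 ^ K ≤ 1 / 2 := by
      rw [div_le_div_iff₀ (by positivity) two_pos, one_mul, ← pow_succ]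
      exact pow_le_pow_right₀ one_le_two hj
    rw [hη_one _ hle, ofReal_one, mul_one, ← ofReal_norm, norm_cpow_real, norm_mul, norm_I,
      one_mul, norm_intCast, habs, ← Real.rpow_pow_comm zero_le_two,
      ENNReal.ofReal_pow (by positivity), ← ENNReal.ofReal_rpow_of_pos two_pos,
      ENNReal.ofReal_ofNat]
  · have hle : (1 : ℝ) ≤ 2 ^ j / 2 ^ K := by
      rw [one_le_div (by positivity)]
      exact pow_le_pow_right₀ one_le_two (not_lt.mp hj)
    rw [hη_zero _ hle, ofReal_zero, mul_zero, enorm_zero]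

variable [Fact (0 < T)] {F : AddCircle T → ℂ}

lemma fourierCoeff_sum_smul_fourier (s : Finset ℤ) (c : ℤ → ℂ) (m : ℤ) :
    fourierCoeff (⇑(∑ k ∈ s, c k • fourier k : C(AddCircle T, ℂ))) m =
      if m ∈ s then c m else 0 := by
  rw [ContinuousMap.coe_sum, fourierCoeff.sum]
  · simp only [ContinuousMap.coe_smul, fourierCoeff.const_smul, Finset.sum_apply,
      fourierCoeff_fourier, Pi.single_apply, smul_eq_mul, mul_ite, mul_one, mul_zero,
      Finset.sum_ite_eq]
  · exact fun k _ =>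
      (c k • fourier k : C(AddCircle T, ℂ)).continuous.integrable_of_hasCompactSupport
        (HasCompactSupport.of_compactSpace _)

/-- The Weyl derivative of order `α` of the de la Vallée Poussin mean `η_N F` on the circle, as
a trigonometric polynomial of degree less than `N`. -/
noncomputable def circleVdpWeyl (η : ℝ → ℝ) (α : ℝ) (N : ℕ) (F : AddCircle T → ℂ) :
    C(AddCircle T, ℂ) :=
  ∑ m ∈ Ioo (-(N : ℤ)) N, (vdpWeylMultiplier η α N m * fourierCoeff F m) • fourier m

lemma integrable_circleVdpWeyl (η : ℝ → ℝ) (α : ℝ) (N : ℕ) (F : AddCircle T → ℂ) :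
    Integrable (circleVdpWeyl η α N F) haarAddCircle :=
  (circleVdpWeyl η α N F).continuous.integrable_of_hasCompactSupport
    (HasCompactSupport.of_compactSpace _)

lemma fourierCoeff_circleVdpWeyl (hη : ∀ ξ : ℝ, 1 ≤ ξ → η ξ = 0) (α : ℝ) {N : ℕ} (hN : 0 < N)
    (F : AddCircle T → ℂ) (m : ℤ) :
    fourierCoeff (circleVdpWeyl η α N F) m = vdpWeylMultiplier η α N m * fourierCoeff F m := by
  rw [circleVdpWeyl, fourierCoeff_sum_smul_fourier]
  split_ifs with hm
  · rfl
  · rw [vdpWeylMultiplier_eq_zero hη α hN hm, zero_mul]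

lemma IsLacunary.vdpWeyl (hl : IsLacunary F) (hη : ∀ ξ : ℝ, 1 ≤ ξ → η ξ = 0) (α : ℝ) {N : ℕ}
    (hN : 0 < N) : IsLacunary (circleVdpWeyl η α N F) :=
  hl.of_fourierCoeff_eq_zero fun m hm => by
    rw [fourierCoeff_circleVdpWeyl hη α hN, hm, mul_zero]

lemma fourierEnergy_circleVdpWeyl (hη : ∀ ξ : ℝ, 1 ≤ ξ → η ξ = 0) (α : ℝ) {N : ℕ} (hN : 0 < N)
    (F : AddCircle T → ℂ) :
    fourierEnergy (circleVdpWeyl η α N F) =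
      ∑' m : ℤ, ‖vdpWeylMultiplier η α N m‖ₑ ^ 2 * ‖fourierCoeff F m‖ₑ ^ 2 :=
  fourierEnergy_eq_tsum_of_enorm_fourierCoeff_eq fun m => by
    rw [fourierCoeff_circleVdpWeyl hη α hN, enorm_mul]

end VallePoussin

section DyadicSums

lemma pow_mul_ite_pow {M : Type*} [CommMonoidWithZero M] {P Q : M} (hPQ : P * Q = 1) (K j : ℕ) :
    Q ^ K * (if j < K then P ^ j else 0) = if j < K then Q ^ (K - j) else 0 := by
  split_ifs with h
  · conv_lhs => rw [← Nat.sub_add_cancel h.le, pow_add, mul_assoc, mul_comm (Q ^ j), ← mul_pow,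
      hPQ, one_pow, mul_one]
  · rw [mul_zero]

lemma tsum_ite_pow_le (Q : ℝ≥0∞) (n j : ℕ) :
    ∑' k : ℕ, (if j < n + k then Q ^ (n + k - j) else 0) ^ 2 ≤
      (1 - Q ^ 2)⁻¹ * (Q ^ (n - j)) ^ 2 := by
  have hinj : Injective fun i : ℕ => j - n + i := add_right_injective _
  have hsupp : (support fun k : ℕ => (if j < n + k then Q ^ (n + k - j) else 0) ^ 2) ⊆
      Set.range fun i : ℕ => j - n + i := fun k hk => by
    have hlt : j < n + k := by
      by_contra hlt
      rw [mem_support, if_neg hlt] at hk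
      exact hk (zero_pow two_ne_zero)
    exact ⟨k - (j - n), Nat.add_sub_of_le (by omega)⟩
  rw [← hinj.tsum_eq hsupp, ← ENNReal.tsum_geometric, ← ENNReal.tsum_mul_right]
  refine ENNReal.tsum_le_tsum fun i => ?_
  split_ifs with h
  · have hexp : n + (j - n + i) - j = i + (n - j) := by omega
    rw [hexp, pow_add, mul_pow, pow_right_comm]
  · rw [zero_pow two_ne_zero]
    exact zero_le

lemma le_tsum_ite_pow (Q : ℝ≥0∞) (n j : ℕ) :
    Q ^ 2 * (Q ^ (n - j)) ^ 2 ≤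
      ∑' k : ℕ, (if j < n + k then Q ^ (n + k - j) else 0) ^ 2 := by
  refine le_of_eq_of_le ?_ (ENNReal.le_tsum (j - n + 1))
  have hexp : n + (j - n + 1) - j = n - j + 1 := by omega
  rw [if_pos (by omega), hexp, ← mul_pow, ← pow_succ']

end DyadicSums

section VallePoussinEnergy

variable {T : ℝ} [Fact (0 < T)] {F : AddCircle T → ℂ} {η : ℝ → ℝ}

lemma tsum_fourierEnergy_circleVdpWeyl (hη : ∀ ξ : ℝ, 1 ≤ ξ → η ξ = 0) (α : ℝ) (Q : ℝ≥0∞)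
    (n : ℕ) (F : AddCircle T → ℂ) :
    ∑' k : ℕ, (Q ^ (n + k)) ^ 2 * fourierEnergy (circleVdpWeyl η α (2 ^ (n + k)) F) =
      ∑' m : ℤ, (∑' k : ℕ, (Q ^ (n + k) * ‖vdpWeylMultiplier η α (2 ^ (n + k)) m‖ₑ) ^ 2) *
        ‖fourierCoeff F m‖ₑ ^ 2 := by
  simp only [fourierEnergy_circleVdpWeyl hη α (pow_pos two_pos _), ← ENNReal.tsum_mul_left,
    ← ENNReal.tsum_mul_right, mul_pow, mul_assoc]
  exact ENNReal.tsum_comm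

lemma tsum_sq_pow_mul_enorm_vdpWeylMultiplier (hη_one : ∀ ξ : ℝ, ξ ≤ 1 / 2 → η ξ = 1)
    (hη_zero : ∀ ξ : ℝ, 1 ≤ ξ → η ξ = 0) (α : ℝ) (n : ℕ) {j : ℕ} {m : ℤ}
    (hm : m.natAbs = 2 ^ j) :
    ∑' k : ℕ, (((2 : ℝ≥0∞) ^ (-α)) ^ (n + k) * ‖vdpWeylMultiplier η α (2 ^ (n + k)) m‖ₑ) ^ 2 =
      ∑' k : ℕ, (if j < n + k then ((2 : ℝ≥0∞) ^ (-α)) ^ (n + k - j) else 0) ^ 2 := by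
  have hinv : (2 : ℝ≥0∞) ^ α * 2 ^ (-α) = 1 := by
    rw [← ENNReal.rpow_add _ _ two_ne_zero ENNReal.ofNat_ne_top, add_neg_cancel,
      ENNReal.rpow_zero]
  simp only [enorm_vdpWeylMultiplier hη_one hη_zero α _ hm, pow_mul_ite_pow hinv]

lemma tsum_fourierEnergy_circleVdpWeyl_le (hη_one : ∀ ξ : ℝ, ξ ≤ 1 / 2 → η ξ = 1)
    (hη_zero : ∀ ξ : ℝ, 1 ≤ ξ → η ξ = 0) (α : ℝ) (hl : IsLacunary F) (n : ℕ) :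
    ∑' k : ℕ, (((2 : ℝ≥0∞) ^ (-α)) ^ (n + k)) ^ 2 *
        fourierEnergy (circleVdpWeyl η α (2 ^ (n + k)) F) ≤
      (1 - ((2 : ℝ≥0∞) ^ (-α)) ^ 2)⁻¹ * smoothnessEnergy α n F := by
  rw [tsum_fourierEnergy_circleVdpWeyl hη_zero, smoothnessEnergy, ← ENNReal.tsum_mul_left]
  simp only [← mul_assoc]
  refine hl.tsum_mul_le_tsum_mul fun j m hm => ?_
  rw [tsum_sq_pow_mul_enorm_vdpWeylMultiplier hη_one hη_zero α n hm,
    dyadicWeight_of_natAbs_eq α n hm]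
  exact tsum_ite_pow_le _ n j

lemma smoothnessEnergy_le_tsum_fourierEnergy_circleVdpWeyl
    (hη_one : ∀ ξ : ℝ, ξ ≤ 1 / 2 → η ξ = 1) (hη_zero : ∀ ξ : ℝ, 1 ≤ ξ → η ξ = 0) (α : ℝ)
    (hl : IsLacunary F) (n : ℕ) :
    ((2 : ℝ≥0∞) ^ (-α)) ^ 2 * smoothnessEnergy α n F ≤
      ∑' k : ℕ, (((2 : ℝ≥0∞) ^ (-α)) ^ (n + k)) ^ 2 *
        fourierEnergy (circleVdpWeyl η α (2 ^ (n + k)) F) := by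
  rw [tsum_fourierEnergy_circleVdpWeyl hη_zero, smoothnessEnergy, ← ENNReal.tsum_mul_left]
  simp only [← mul_assoc]
  refine hl.tsum_mul_le_tsum_mul fun j m hm => ?_
  rw [tsum_sq_pow_mul_enorm_vdpWeylMultiplier hη_one hη_zero α n hm,
    dyadicWeight_of_natAbs_eq α n hm]
  exact le_tsum_ite_pow _ n j

end VallePoussinEnergy

section Lift

variable {T : ℝ} [Fact (0 < T)]

lemma periodic_lift_eq_liftIoc {f : ℝ → ℂ} (hf : Periodic f T) (a : ℝ) :
    hf.lift = AddCircle.liftIoc T a f := by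
  funext x
  obtain ⟨y, hy, rfl⟩ : ∃ y ∈ Set.Ioc a (a + T), (y : AddCircle T) = x :=
    ⟨_, (AddCircle.equivIoc T a x).2, (AddCircle.equivIoc T a).symm_apply_apply x⟩
  rw [hf.lift_coe, AddCircle.liftIoc_coe_apply hy]

end Lift

section Circle

lemma restrict_Ioc_eq_circleMeasure :
    volume.restrict (Set.Ioc 0 (0 + 2 * Real.pi)) = circleMeasure := by
  rw [zero_add, restrict_Ioc_eq_restrict_Icc, circleMeasure]

lemma fracDiffOne_comp_coe (α h : ℝ) (F : AddCircle (2 * Real.pi) → ℂ) :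
    fracDiffOne α h (fun x : ℝ => F x) = fun x : ℝ => circleFracDiff α h F x := by
  funext x
  simp only [fracDiffOne, circleFracDiff, ← AddCircle.coe_add, Complex.coe_smul]

variable [Fact (0 < 2 * Real.pi)]

lemma measurePreserving_coe_circleMeasure :
    MeasurePreserving ((↑) : ℝ → AddCircle (2 * Real.pi)) circleMeasure volume :=
  restrict_Ioc_eq_circleMeasure ▸ AddCircle.measurePreserving_mk (2 * Real.pi) 0

lemma exists_integrable_comp_coe_eq {f : ℝ → ℂ} (hp : Periodic f (2 * Real.pi))
    (hf : Integrable f circleMeasure) :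
    ∃ F : AddCircle (2 * Real.pi) → ℂ, (fun x : ℝ => F x) = f ∧ Integrable F haarAddCircle := by
  rw [← restrict_Ioc_eq_circleMeasure, ← memLp_one_iff_integrable] at hf
  have hvol := memLp_one_iff_integrable.mp hf.memLp_liftIoc
  rw [← periodic_lift_eq_liftIoc hp, AddCircle.volume_eq_smul_haarAddCircle,
    integrable_smul_measure (ENNReal.ofReal_pos.mpr Fact.out).ne' ENNReal.ofReal_ne_top] at hvol
  exact ⟨hp.lift, funext hp.lift_coe, hvol⟩

variable {F : AddCircle (2 * Real.pi) → ℂ}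

lemma eLpNorm_one_comp_coe (hF : AEStronglyMeasurable F haarAddCircle) :
    eLpNorm (fun x : ℝ => F x) 1 circleMeasure =
      ENNReal.ofReal (2 * Real.pi) * eLpNorm F 1 haarAddCircle := by
  rw [← eLpNorm_one_smul_measure, ← AddCircle.volume_eq_smul_haarAddCircle]
  refine eLpNorm_comp_measurePreserving ?_ measurePreserving_coe_circleMeasure
  rw [AddCircle.volume_eq_smul_haarAddCircle]
  exact hF.smul_measure _

lemma fourierCoeffOne_comp_coe (F : AddCircle (2 * Real.pi) → ℂ) (m : ℤ) :
    fourierCoeffOne (fun x : ℝ => F x) m = fourierCoeff F m := by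
  rw [fourierCoeff_eq_intervalIntegral F m 0, fourierCoeffOne,
    intervalIntegral.integral_of_le (by positivity), restrict_Ioc_eq_circleMeasure]
  congr 2 with x
  rw [fourier_coe_apply, smul_eq_mul, mul_comm]
  congr 2
  push_cast
  field_simp

lemma isLacunary_iff_lacunaryFourier_comp_coe :
    IsLacunary F ↔ LacunaryFourier fun x : ℝ => F x := by
  simp only [IsLacunary, LacunaryFourier, fourierCoeffOne_comp_coe]

lemma vdpWeylOne_comp_coe {η : ℝ → ℝ} (hη : ∀ ξ : ℝ, 1 ≤ ξ → η ξ = 0) (α : ℝ) {N : ℕ}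
    (hN : 0 < N) (F : AddCircle (2 * Real.pi) → ℂ) :
    vdpWeylOne η α N (fun x : ℝ => F x) = fun x : ℝ => circleVdpWeyl η α N F x := by
  funext x
  have hterm (m : ℤ) : fourier m (x : AddCircle (2 * Real.pi)) = Complex.exp (I * m * x) := by
    rw [fourier_coe_apply]
    congr 1
    push_cast
    field_simp
  simp only [vdpWeylOne, circleVdpWeyl, fourierCoeffOne_comp_coe, ← vdpWeylMultiplier.eq_1,
    ContinuousMap.coe_sum, Finset.sum_apply, ContinuousMap.coe_smul, Pi.smul_apply, smul_eq_mul,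
    hterm]
  refine tsum_eq_sum fun m hm => ?_
  rw [vdpWeylMultiplier_eq_zero hη α hN hm, zero_mul, zero_mul]

end Circle

section SquareRoots

lemma sq_le_iff_le_rpow_half {x y : ℝ≥0∞} : x ^ 2 ≤ y ↔ x ≤ y ^ ((1 : ℝ) / 2) := by
  rw [one_div, ENNReal.le_rpow_inv_iff two_pos, ENNReal.rpow_two]

lemma sq_rpow_half (x : ℝ≥0∞) : (x ^ 2) ^ ((1 : ℝ) / 2) = x := by
  rw [one_div, ← ENNReal.rpow_two, ENNReal.rpow_rpow_inv two_ne_zero]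

lemma exists_ne_top_forall_rpow_half_le {a b : ℝ≥0∞} (ha : a ≠ 0) (ha' : a ≠ ∞) (hb : b ≠ ∞) :
    ∃ C ≠ ∞, ∀ x y : ℝ≥0∞, a * x ≤ b * y →
      x ^ ((1 : ℝ) / 2) ≤ C * y ^ ((1 : ℝ) / 2) := by
  refine ⟨(a⁻¹ * b) ^ ((1 : ℝ) / 2), ENNReal.rpow_ne_top_of_nonneg (by norm_num)
    (ENNReal.mul_ne_top (ENNReal.inv_ne_top.mpr ha) hb), fun x y h => ?_⟩
  rw [← ENNReal.mul_rpow_of_nonneg _ _ (by norm_num), mul_assoc]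
  gcongr
  rwa [← ENNReal.div_eq_inv_mul, ENNReal.le_div_iff_mul_le (.inl ha) (.inl ha'), mul_comm]

end SquareRoots

section Equivalence

/-- The square `∑_{k ≥ n} 2^{-2αk} ‖(η_{2^k} f)^{(α)}‖₁²` of the quantity to which the modulus of
smoothness is compared. -/
noncomputable def vdpWeylSqSum (η : ℝ → ℝ) (α : ℝ) (n : ℕ) (f : ℝ → ℂ) : ℝ≥0∞ :=
  ∑' k : ℕ, ((2 : ℝ≥0∞) ^ (-((n + k : ℕ) : ℝ) * α) *
    eLpNorm (vdpWeylOne η α (2 ^ (n + k)) f) 1 circleMeasure) ^ (2 : ℝ)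

lemma vdpWeylSqSum_eq (η : ℝ → ℝ) (α : ℝ) (n : ℕ) (f : ℝ → ℂ) :
    vdpWeylSqSum η α n f = ∑' k : ℕ, (((2 : ℝ≥0∞) ^ (-α)) ^ (n + k)) ^ 2 *
      eLpNorm (vdpWeylOne η α (2 ^ (n + k)) f) 1 circleMeasure ^ 2 := by
  have hpow (N : ℕ) : (2 : ℝ≥0∞) ^ (-(N : ℝ) * α) = (2 ^ (-α)) ^ N := by
    rw [← ENNReal.rpow_mul_natCast]
    ring_nf
  simp only [vdpWeylSqSum, hpow, ENNReal.rpow_two, mul_pow]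

variable [Fact (0 < 2 * Real.pi)] {F : AddCircle (2 * Real.pi) → ℂ} {α : ℝ} {η : ℝ → ℝ}

lemma eLpNorm_one_comp_coe_sq_le (hF : Integrable F haarAddCircle) :
    eLpNorm (fun x : ℝ => F x) 1 circleMeasure ^ 2 ≤
      ENNReal.ofReal (2 * Real.pi) ^ 2 * fourierEnergy F := by
  rw [eLpNorm_one_comp_coe hF.1, mul_pow]
  gcongr
  exact eLpNorm_one_sq_le_fourierEnergy hF

lemma IsLacunary.fourierEnergy_le_eLpNorm_one_comp_coe_sq (hl : IsLacunary F)
    (hF : Integrable F haarAddCircle) :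
    fourierEnergy F ≤ 64 * eLpNorm (fun x : ℝ => F x) 1 circleMeasure ^ 2 := by
  have hone : 1 ≤ ENNReal.ofReal (2 * Real.pi) := by
    rw [ENNReal.one_le_ofReal]
    linarith [Real.pi_gt_three]
  refine (hl.fourierEnergy_le hF).trans ?_
  rw [eLpNorm_one_comp_coe hF.1]
  gcongr
  exact le_mul_of_one_le_left' hone

lemma fracModSmoothOne_comp_coe_sq_le (hα : 0 < α) (hF : Integrable F haarAddCircle)
    (hl : IsLacunary F) (n : ℕ) :
    fracModSmoothOne α 1 (fun x : ℝ => F x) (1 / 2 ^ n) ^ 2 ≤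
      ENNReal.ofReal (2 * Real.pi) ^ 2 *
        (ENNReal.ofReal (2 ^ α) ^ 2 * smoothnessEnergy α n F) := by
  rw [sq_le_iff_le_rpow_half]
  refine iSup_le fun ⟨h, hh⟩ => sq_le_iff_le_rpow_half.mp ?_
  rw [fracDiffOne_comp_coe]
  refine (eLpNorm_one_comp_coe_sq_le (integrable_circleFracDiff hα hF h)).trans ?_
  gcongr
  exact fourierEnergy_circleFracDiff_le hα hF hl hh

lemma smoothnessEnergy_le_fracModSmoothOne_comp_coe_sq (hα : 0 < α)
    (hF : Integrable F haarAddCircle) (hl : IsLacunary F) (n : ℕ) :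
    ENNReal.ofReal ((1 / 3) ^ α) ^ 2 * smoothnessEnergy α n F ≤
      64 * fracModSmoothOne α 1 (fun x : ℝ => F x) (1 / 2 ^ n) ^ 2 := by
  have hstep : |Real.pi / 6 / 2 ^ n| ≤ 1 / 2 ^ n := by
    rw [abs_of_nonneg (by positivity)]
    gcongr
    linarith [Real.pi_le_four]
  refine (smoothnessEnergy_le_fourierEnergy_circleFracDiff hα hF hl n).trans ?_
  refine ((hl.fracDiff hα hF _).fourierEnergy_le_eLpNorm_one_comp_coe_sq
    (integrable_circleFracDiff hα hF _)).trans ?_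
  rw [← fracDiffOne_comp_coe]
  gcongr
  exact le_iSup (fun h : {h : ℝ // |h| ≤ 1 / 2 ^ n} =>
    eLpNorm (fracDiffOne α h.1 fun x : ℝ => F x) 1 circleMeasure) ⟨_, hstep⟩

lemma vdpWeylSqSum_comp_coe_le (hη_one : ∀ ξ : ℝ, ξ ≤ 1 / 2 → η ξ = 1)
    (hη_zero : ∀ ξ : ℝ, 1 ≤ ξ → η ξ = 0) (α : ℝ) (hl : IsLacunary F) (n : ℕ) :
    vdpWeylSqSum η α n (fun x : ℝ => F x) ≤ ENNReal.ofReal (2 * Real.pi) ^ 2 *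
      ((1 - ((2 : ℝ≥0∞) ^ (-α)) ^ 2)⁻¹ * smoothnessEnergy α n F) := by
  refine le_trans ?_
    (mul_le_mul_right (tsum_fourierEnergy_circleVdpWeyl_le hη_one hη_zero α hl n) _)
  rw [vdpWeylSqSum_eq, ← ENNReal.tsum_mul_left]
  refine ENNReal.tsum_le_tsum fun k => ?_
  rw [vdpWeylOne_comp_coe hη_zero α (by positivity), mul_left_comm]
  gcongr
  exact eLpNorm_one_comp_coe_sq_le (integrable_circleVdpWeyl η α _ F)

lemma smoothnessEnergy_le_vdpWeylSqSum_comp_coe (hη_one : ∀ ξ : ℝ, ξ ≤ 1 / 2 → η ξ = 1)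
    (hη_zero : ∀ ξ : ℝ, 1 ≤ ξ → η ξ = 0) (α : ℝ) (hl : IsLacunary F) (n : ℕ) :
    ((2 : ℝ≥0∞) ^ (-α)) ^ 2 * smoothnessEnergy α n F ≤
      64 * vdpWeylSqSum η α n fun x : ℝ => F x := by
  refine (smoothnessEnergy_le_tsum_fourierEnergy_circleVdpWeyl hη_one hη_zero α hl n).trans ?_
  rw [vdpWeylSqSum_eq, ← ENNReal.tsum_mul_left]
  refine ENNReal.tsum_le_tsum fun k => ?_
  rw [vdpWeylOne_comp_coe hη_zero α (by positivity), mul_left_comm]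
  gcongr
  exact (hl.vdpWeyl hη_zero α (by positivity)).fourierEnergy_le_eLpNorm_one_comp_coe_sq
    (integrable_circleVdpWeyl η α _ F)

lemma exists_fracModSmoothOne_comp_coe_le (hα : 0 < α) :
    ∃ C ≠ ∞, ∀ η : ℝ → ℝ, (∀ ξ : ℝ, ξ ≤ 1 / 2 → η ξ = 1) → (∀ ξ : ℝ, 1 ≤ ξ → η ξ = 0) →
      ∀ F : AddCircle (2 * Real.pi) → ℂ, Integrable F haarAddCircle → IsLacunary F → ∀ n : ℕ,
        fracModSmoothOne α 1 (fun x : ℝ => F x) (1 / 2 ^ n) ≤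
          C * (vdpWeylSqSum η α n fun x : ℝ => F x) ^ ((1 : ℝ) / 2) := by
  set Q := (2 : ℝ≥0∞) ^ (-α)
  set A := ENNReal.ofReal (2 * Real.pi)
  set B := ENNReal.ofReal (2 ^ α)
  have hQ_zero : Q ≠ 0 := (ENNReal.rpow_pos two_pos ENNReal.ofNat_ne_top).ne'
  have hQ : Q ≠ ∞ := ENNReal.rpow_ne_top_of_ne_zero two_ne_zero ENNReal.ofNat_ne_top
  have hb : 64 * A ^ 2 * B ^ 2 ≠ ∞ := by finiteness
  obtain ⟨C, hC, hsqrt⟩ := exists_ne_top_forall_rpow_half_le (pow_ne_zero 2 hQ_zero)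
    (ENNReal.pow_ne_top hQ) hb
  refine ⟨C, hC, fun η hη_one hη_zero F hF hl n => ?_⟩
  rw [← sq_rpow_half (fracModSmoothOne _ _ _ _)]
  apply hsqrt
  calc _ ≤ Q ^ 2 * (A ^ 2 * (B ^ 2 * smoothnessEnergy α n F)) := by
        gcongr
        exact fracModSmoothOne_comp_coe_sq_le hα hF hl n
    _ = A ^ 2 * B ^ 2 * (Q ^ 2 * smoothnessEnergy α n F) := by ring
    _ ≤ A ^ 2 * B ^ 2 * (64 * vdpWeylSqSum η α n fun x : ℝ => F x) := by
        gcongr A ^ 2 * B ^ 2 * ?_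
        exact smoothnessEnergy_le_vdpWeylSqSum_comp_coe hη_one hη_zero α hl n
    _ = _ := by ring

lemma exists_vdpWeylSqSum_comp_coe_rpow_half_le (hα : 0 < α) :
    ∃ D ≠ ∞, ∀ η : ℝ → ℝ, (∀ ξ : ℝ, ξ ≤ 1 / 2 → η ξ = 1) → (∀ ξ : ℝ, 1 ≤ ξ → η ξ = 0) →
      ∀ F : AddCircle (2 * Real.pi) → ℂ, Integrable F haarAddCircle → IsLacunary F → ∀ n : ℕ,
        (vdpWeylSqSum η α n fun x : ℝ => F x) ^ ((1 : ℝ) / 2) ≤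
          D * fracModSmoothOne α 1 (fun x : ℝ => F x) (1 / 2 ^ n) := by
  set R := ENNReal.ofReal ((1 / 3) ^ α)
  set A := ENNReal.ofReal (2 * Real.pi)
  set G := (1 - ((2 : ℝ≥0∞) ^ (-α)) ^ 2)⁻¹
  have hR_zero : R ≠ 0 := (ENNReal.ofReal_pos.mpr (by positivity)).ne'
  have hQ : (2 : ℝ≥0∞) ^ (-α) < 1 :=
    ENNReal.rpow_lt_one_of_one_lt_of_neg ENNReal.one_lt_two (neg_neg_of_pos hα)
  have hG : G ≠ ∞ :=
    ENNReal.inv_ne_top.mpr (tsub_pos_of_lt (pow_lt_one₀ zero_le hQ two_ne_zero)).ne'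
  have hb : 64 * A ^ 2 * G ≠ ∞ := by finiteness
  obtain ⟨D, hD, hsqrt⟩ := exists_ne_top_forall_rpow_half_le (pow_ne_zero 2 hR_zero)
    (ENNReal.pow_ne_top ENNReal.ofReal_ne_top) hb
  refine ⟨D, hD, fun η hη_one hη_zero F hF hl n => ?_⟩
  rw [← sq_rpow_half (fracModSmoothOne _ _ _ _)]
  apply hsqrt
  calc _ ≤ R ^ 2 * (A ^ 2 * (G * smoothnessEnergy α n F)) := by
        gcongr
        exact vdpWeylSqSum_comp_coe_le hη_one hη_zero α hl n
    _ = A ^ 2 * G * (R ^ 2 * smoothnessEnergy α n F) := by ring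
    _ ≤ A ^ 2 * G * (64 * fracModSmoothOne α 1 (fun x : ℝ => F x) (1 / 2 ^ n) ^ 2) := by
        gcongr A ^ 2 * G * ?_
        exact smoothnessEnergy_le_fracModSmoothOne_comp_coe_sq hα hF hl n
    _ = _ := by ring

end Equivalence

theorem stmt16_general (α : ℝ) (hα : 0 < α) :
    ∃ c C : ℝ≥0∞, 0 < c ∧ C ≠ ∞ ∧
      ∀ η : ℝ → ℝ, (∀ ξ : ℝ, ξ ≤ 1 / 2 → η ξ = 1) → (∀ ξ : ℝ, 1 ≤ ξ → η ξ = 0) →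
        ∀ f : ℝ → ℂ, Periodic2PiOne f →
          AEStronglyMeasurable f circleMeasure →
          eLpNorm f 1 circleMeasure ≠ ∞ →
          LacunaryFourier f →
          ∀ n : ℕ,
            c * vdpWeylSqSum η α n f ^ ((1 : ℝ) / 2) ≤ fracModSmoothOne α 1 f (1 / 2 ^ n) ∧
              fracModSmoothOne α 1 f (1 / 2 ^ n) ≤ C * vdpWeylSqSum η α n f ^ ((1 : ℝ) / 2) := by
  have : Fact (0 < 2 * Real.pi) := ⟨Real.two_pi_pos⟩
  obtain ⟨D, hD, hlower⟩ := exists_vdpWeylSqSum_comp_coe_rpow_half_le hα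
  obtain ⟨C, hC, hupper⟩ := exists_fracModSmoothOne_comp_coe_le hα
  refine ⟨D⁻¹, C, ENNReal.inv_pos.mpr hD, hC, fun η hη_one hη_zero f hp hm hfin hl n => ?_⟩
  obtain ⟨F, rfl, hF⟩ := exists_integrable_comp_coe_eq hp
    (memLp_one_iff_integrable.mp ⟨hm, hfin.lt_top⟩)
  have hlac := isLacunary_iff_lacunaryFourier_comp_coe.mpr hl
  rw [← ENNReal.div_eq_inv_mul]
  exact ⟨ENNReal.div_le_of_le_mul' (hlower η hη_one hη_zero F hF hlac n),
    hupper η hη_one hη_zero F hF hlac n⟩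

/-- For `f ∈ L_1(𝕋)` with lacunary Fourier series and `α > 0`,
`ω_α(f,2^{-n})_1 ≍ (∑_{k=n}^∞ 2^{-2αk} ‖(η_{2^k}f)^{(α)}‖_1²)^{1/2}`. -/
theorem stmt16 (η : ℝ → ℝ) (hη_smooth : ContDiffOn ℝ (⊤ : ℕ∞) η (Set.Ici 0))
    (hη_one : ∀ ξ : ℝ, ξ ≤ 1 / 2 → η ξ = 1) (hη_zero : ∀ ξ : ℝ, 1 ≤ ξ → η ξ = 0)
    (α : ℝ) (hα : 0 < α) :
    ∃ c C : ℝ≥0∞, 0 < c ∧ C ≠ ∞ ∧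
      ∀ f : ℝ → ℂ, Periodic2PiOne f →
        AEStronglyMeasurable f circleMeasure →
        eLpNorm f 1 circleMeasure ≠ ∞ →
        LacunaryFourier f →
        ∀ n : ℕ, 1 ≤ n →
          c * (∑' k : ℕ,
                ((2 : ℝ≥0∞) ^ (-((n + k : ℕ) : ℝ) * α) *
                  eLpNorm (vdpWeylOne η α (2 ^ (n + k)) f) 1 circleMeasure) ^ (2 : ℝ)) ^
              ((1 : ℝ) / 2)
            ≤ fracModSmoothOne α 1 f (1 / 2 ^ n) ∧
          fracModSmoothOne α 1 f (1 / 2 ^ n)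
            ≤ C * (∑' k : ℕ,
                ((2 : ℝ≥0∞) ^ (-((n + k : ℕ) : ℝ) * α) *
                  eLpNorm (vdpWeylOne η α (2 ^ (n + k)) f) 1 circleMeasure) ^ (2 : ℝ)) ^
              ((1 : ℝ) / 2) := by
  obtain ⟨c, C, hc, hC, hcomp⟩ := stmt16_general α hα
  exact ⟨c, C, hc, hC, fun f hp hm hfin hl n _ => hcomp η hη_one hη_zero f hp hm hfin hl n⟩
end
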